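/- (Concentration–compactness, mass-at-infinity part.) Let N ≥ 3, α ∈ (0, N), p ≥ (N+α)/(N−2), and let {u_n} be uniformly bounded in D^{1,2}(G). Then, after passing to a subsequence converging pointwise to some u ∈ D^{1,2}(G), the limits L(r) := lim_{n→∞} ∑_{d(x,e)>r} |∇u_n(x)|₂² and M(r) := lim_{n→∞} ∑_{d(x,e)>r} (R_α ∗ |u_n|^p)(x)|u_n(x)|^p exist for every r ≥ 1, and setting μ_∞ := lim_{r→∞} L(r) and ν_∞ := lim_{r→∞} M(r), one has: ν_∞ ≤ K·μ_∞^p; lim_{n→∞} ‖u_n‖_{D^{1,2}}² = ‖u‖_{D^{1,2}}² + μ_∞; and lim_{n→∞} ∑_{x∈G} (R_α ∗ |u_n|^p)(x)|u_n(x)|^p = ∑_{x∈G} (R_α ∗ |u|^p)(x)|u(x)|^p + ν_∞. -/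

import Mathlib

open Filter Topology

noncomputable section

namespace Choquard

variable {G : Type*}

/-- The word metric on the Cayley graph of `(G, S)`: the least `k` such that
`y = x * s₁ * ⋯ * s_k` with each `sᵢ ∈ S`. -/
def wordDist [Group G] (S : Finset G) (x y : G) : ℕ :=
  sInf {k : ℕ | ∃ l : List G, (∀ s ∈ l, s ∈ S) ∧ l.length = k ∧ y = x * l.prod}

/-- Convolution against a kernel: `(R ∗ f)(x) = ∑_{y ∈ G} R(x,y) f(y)`. -/
def conv (R : G → G → ℝ) (f : G → ℝ) (x : G) : ℝ := ∑' y, R x y * f y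

/-- The `ℓ^q(G)` norm of `u`. -/
def lpNorm (q : ℝ) (u : G → ℝ) : ℝ := (∑' x, |u x| ^ q) ^ (1 / q)

/-- `u ∈ ℓ^q(G)`. -/
def Memlp (q : ℝ) (u : G → ℝ) : Prop := Summable fun x : G => |u x| ^ q

/-- `|∇u(x)|_p^p = ∑_{y ∼ x} |u(y) − u(x)|^p`, where `y ∼ x` iff `y = x * s`, `s ∈ S`. -/
def gradP [Group G] (S : Finset G) (p : ℝ) (u : G → ℝ) (x : G) : ℝ :=
  ∑ s ∈ S, |u (x * s) - u x| ^ p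

/-- The `D^{1,p}` norm `(∑_x ∑_{y ∼ x} |u(y) − u(x)|^p)^{1/p}`. -/
def D1Norm [Group G] (S : Finset G) (p : ℝ) (u : G → ℝ) : ℝ :=
  (∑' x, gradP S p u x) ^ (1 / p)

/-- `u ∈ D^{1,p}(G) = {u ∈ ℓ^{Np/(N−p)}(G) : ‖u‖_{D^{1,p}} < ∞}`. -/
def MemD1p [Group G] (S : Finset G) (N : ℕ) (p : ℝ) (u : G → ℝ) : Prop :=
  Memlp ((N : ℝ) * p / ((N : ℝ) - p)) u ∧ Summable (gradP S p u)

/-- `|∇u(x)|₂² = ∑_{y ∼ x} (u(y) − u(x))²`. -/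
def gradSq [Group G] (S : Finset G) (u : G → ℝ) (x : G) : ℝ :=
  ∑ s ∈ S, (u (x * s) - u x) ^ 2

/-- The `D^{1,2}` norm. -/
def D12Norm [Group G] (S : Finset G) (u : G → ℝ) : ℝ :=
  (∑' x, gradSq S u x) ^ ((1 : ℝ) / 2)

/-- `u ∈ D^{1,2}(G) = {u ∈ ℓ^{2N/(N−2)}(G) : ‖u‖_{D^{1,2}} < ∞}`. -/
def MemD12 [Group G] (S : Finset G) (N : ℕ) (u : G → ℝ) : Prop :=
  Memlp (2 * (N : ℝ) / ((N : ℝ) - 2)) u ∧ Summable (gradSq S u)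

/-- The graph Laplacian `Δu(x) = ∑_{y ∼ x} (u(y) − u(x))`. -/
def lap [Group G] (S : Finset G) (u : G → ℝ) (x : G) : ℝ :=
  ∑ s ∈ S, (u (x * s) - u x)

/-- `u ∈ D^{2,2}(G) = {u ∈ ℓ^{2N/(N−4)}(G) : ‖Δu‖_{ℓ²} < ∞}`. -/
def MemD22 [Group G] (S : Finset G) (N : ℕ) (u : G → ℝ) : Prop :=
  Memlp (2 * (N : ℝ) / ((N : ℝ) - 4)) u ∧ Summable fun x => (lap S u x) ^ 2

/-- `u ∈ D^{2,p}(G) = {u ∈ ℓ^{Np/(N−2p)}(G) : ‖Δu‖_{ℓ^p} < ∞}`. -/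
def MemD2p [Group G] (S : Finset G) (N : ℕ) (p : ℝ) (u : G → ℝ) : Prop :=
  Memlp ((N : ℝ) * p / ((N : ℝ) - 2 * p)) u ∧ Summable fun x => |lap S u x| ^ p

/-- The nonlocal energy `∑_{x ∈ G} (R_α ∗ |u|^p)(x) |u(x)|^p`. -/
def energy (R : G → G → ℝ) (p : ℝ) (u : G → ℝ) : ℝ :=
  ∑' x, conv R (fun y => |u y| ^ p) x * |u x| ^ p

/-- The optimal constant `K` of the Sobolev-type inequality. -/
def bestK [Group G] (S : Finset G) (N : ℕ) (R : G → G → ℝ) (p : ℝ) : ℝ :=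
  sSup {t : ℝ | ∃ u : G → ℝ, MemD12 S N u ∧ D12Norm S u = 1 ∧ t = energy R p u}

/-- The discrete `p`-Laplacian. -/
def pLap [Group G] (S : Finset G) (p : ℝ) (u : G → ℝ) (x : G) : ℝ :=
  ∑ s ∈ S, |u (x * s) - u x| ^ (p - 2) * (u (x * s) - u x)

/-- The cutoff `Ψ_r`, the indicator of `{x : d(x,e) ≥ r + 1}`. -/
def cutoff [Group G] (S : Finset G) (r : ℕ) (x : G) : ℝ :=
  if r + 1 ≤ wordDist S 1 x then 1 else 0

/-!
The growth of balls gives an isoperimetric inequality by averaging over translations, hence a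
Sobolev inequality; with the Hardy–Littlewood–Sobolev inequality this bounds the nonlocal energy by
a constant times the `p`-th power of the Dirichlet energy, and `K` is the best constant.

Bounded sequences of `D^{1,2}` are bounded in `ℓ^r`, where pointwise convergence forces weak
convergence. Let `u_n → v` pointwise with Dirichlet energies converging to `a` and nonlocal energies
to `E`. If `φ` is finitely supported, passing from `u_n` to `u_n - φ` changes both energies only
through finitely many terms, each of which converges, so no splitting lemma for the full sums is
needed: the energies of `u_n - φ` tend to `a` and `E` corrected by the corresponding differences for
`v` and `v - φ`. Applying the inequality with constant `K` to `u_n - φ` and letting `φ → v` yields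
`E - energy v ≤ K (a - ‖v‖²) ^ p`. Since the sums over balls are finite and converge, the masses
escaping to infinity are exactly `μ_∞ = a - ‖v‖²` and `ν_∞ = E - energy v`.
-/

/-! ### Bounded sets of `ℓ^r` -/

section LpBall

variable {ι β : Type*} {r s B : ℝ} {f : ι → ℝ}

/-- The nonnegative functions of `ℓ^r` norm at most `B`. The bound is imposed on finite partial
sums, so that it passes to pointwise limits without a summability assumption. -/
def lpBall (ι : Type*) (r B : ℝ) : Set (ι → ℝ) :=
  {f | (∀ x, 0 ≤ f x) ∧ ∀ F : Finset ι, ∑ x ∈ F, f x ^ r ≤ B ^ r}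

lemma summable_rpow_of_mem_lpBall (hf : f ∈ lpBall ι r B) : Summable fun x => f x ^ r :=
  summable_of_sum_le (fun x => Real.rpow_nonneg (hf.1 x) r) hf.2

lemma tsum_rpow_le_of_mem_lpBall (hf : f ∈ lpBall ι r B) : ∑' x, f x ^ r ≤ B ^ r :=
  (summable_rpow_of_mem_lpBall hf).tsum_le_of_sum_le hf.2

lemma mem_lpBall_of_tendsto {l : Filter β} [l.NeBot] {u : β → ι → ℝ} (hr : 0 ≤ r)
    (hu : ∀ n, u n ∈ lpBall ι r B) (hlim : ∀ x, Tendsto (fun n => u n x) l (𝓝 (f x))) :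
    f ∈ lpBall ι r B :=
  ⟨fun x => ge_of_tendsto' (hlim x) fun n => (hu n).1 x, fun F =>
    le_of_tendsto' (tendsto_finsetSum F fun x _ => (hlim x).rpow_const (Or.inr hr))
      fun n => (hu n).2 F⟩

lemma le_of_mem_lpBall (hr : 0 < r) (hB : 0 ≤ B) (hf : f ∈ lpBall ι r B) (x : ι) : f x ≤ B := by
  have h := hf.2 {x}
  rwa [Finset.sum_singleton, Real.rpow_le_rpow_iff (hf.1 x) hB hr] at h

lemma lpBall_subset_of_exponent_le (hr : 0 < r) (hrs : r ≤ s) (hB : 0 ≤ B) :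
    lpBall ι r B ⊆ lpBall ι s B := by
  intro f hf
  have hsr : 0 ≤ s - r := sub_nonneg.2 hrs
  refine ⟨hf.1, fun F => ?_⟩
  calc ∑ x ∈ F, f x ^ s = ∑ x ∈ F, f x ^ (s - r) * f x ^ r := by
        refine Finset.sum_congr rfl fun x _ => ?_
        rw [← Real.rpow_add_of_nonneg (hf.1 x) hsr hr.le, sub_add_cancel]
    _ ≤ ∑ x ∈ F, B ^ (s - r) * f x ^ r := by
        gcongr with x
        · exact Real.rpow_nonneg (hf.1 x) r
        · exact hf.1 x
        · exact le_of_mem_lpBall hr hB hf x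
    _ = B ^ (s - r) * ∑ x ∈ F, f x ^ r := (Finset.mul_sum ..).symm
    _ ≤ B ^ (s - r) * B ^ r := by gcongr; exact hf.2 F
    _ = B ^ s := by rw [← Real.rpow_add_of_nonneg hB hsr hr.le, sub_add_cancel]

lemma rpow_mem_lpBall {p : ℝ} (hB : 0 ≤ B) (hf : f ∈ lpBall ι (p * r) B) :
    (fun x => f x ^ p) ∈ lpBall ι r (B ^ p) := by
  refine ⟨fun x => Real.rpow_nonneg (hf.1 x) p, fun F => ?_⟩
  rw [← Real.rpow_mul hB]
  convert hf.2 F using 2 with x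
  rw [← Real.rpow_mul (hf.1 x)]

lemma abs_mem_lpBall {u : ι → ℝ} (hr : 0 < r) (hu : Memlp r u) (hB : lpNorm r u ≤ B) :
    (fun x => |u x|) ∈ lpBall ι r B := by
  have h0 : 0 ≤ ∑' x, |u x| ^ r := tsum_nonneg fun x => by positivity
  rw [lpNorm, one_div, Real.rpow_inv_le_iff_of_pos h0
    ((Real.rpow_nonneg h0 _).trans hB) hr] at hB
  exact ⟨fun x => abs_nonneg _, fun F => (hu.sum_le_tsum F fun x _ => by positivity).trans hB⟩

lemma mem_lpBall_one {g : ι → ℝ} (hg : Summable g) (hg0 : ∀ x, 0 ≤ g x) (hB : ∑' x, g x ≤ B) :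
    g ∈ lpBall ι 1 B := by
  refine ⟨hg0, fun F => ?_⟩
  simp only [Real.rpow_one]
  exact (hg.sum_le_tsum F fun x _ => hg0 x).trans hB

end LpBall

section WeakConvergence

variable {ι β : Type*} {r s B : ℝ} {k : ι → ℝ}

lemma summable_mul_of_mem_lpBall (hsr : s.HolderConjugate r) (hk0 : ∀ x, 0 ≤ k x)
    (hk : Summable fun x => k x ^ s) {f : ι → ℝ} (hf : f ∈ lpBall ι r B) :
    Summable fun x => k x * f x :=
  Real.summable_mul_of_Lp_Lq_of_nonneg hsr hk0 hf.1 hk (summable_rpow_of_mem_lpBall hf)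

lemma tsum_compl_mul_le_of_mem_lpBall (hsr : s.HolderConjugate r) (hk0 : ∀ x, 0 ≤ k x)
    (hk : Summable fun x => k x ^ s) {f : ι → ℝ} (hf : f ∈ lpBall ι r B) (F : Finset ι) :
    ∑' x : {x // x ∉ F}, k x * f x
      ≤ (∑' x : {x // x ∉ F}, k x ^ s) ^ (1 / s) * (B ^ r) ^ (1 / r) := by
  have hfr := summable_rpow_of_mem_lpBall hf
  have hr := hsr.symm.nonneg
  refine (Real.inner_le_Lp_mul_Lq_tsum_of_nonneg (f := fun x : {x // x ∉ F} => k x)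
    (g := fun x => f x) hsr (fun x => hk0 x) (fun x => hf.1 x)
    (hk.subtype _) (hfr.subtype _)).trans ?_
  gcongr
  · exact Real.rpow_nonneg (tsum_nonneg fun x => Real.rpow_nonneg (hk0 _) _) _
  · exact tsum_nonneg fun x => Real.rpow_nonneg (hf.1 _) _
  · exact (hfr.tsum_subtype_le _ {x | x ∉ F} fun x => Real.rpow_nonneg (hf.1 x) r).trans
      (tsum_rpow_le_of_mem_lpBall hf)

/-- A pointwise convergent bounded sequence of `ℓ^r` converges weakly: by Hölder, the tails of the
pairing with `k` are small uniformly in `n`. -/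
lemma tendsto_tsum_mul_of_mem_lpBall {l : Filter β} [l.NeBot] (hsr : s.HolderConjugate r)
    (hk0 : ∀ x, 0 ≤ k x) (hk : Summable fun x => k x ^ s) {u : β → ι → ℝ} {v : ι → ℝ}
    (hu : ∀ n, u n ∈ lpBall ι r B) (hlim : ∀ x, Tendsto (fun n => u n x) l (𝓝 (v x))) :
    Tendsto (fun n => ∑' x, k x * u n x) l (𝓝 (∑' x, k x * v x)) := by
  have hv : v ∈ lpBall ι r B := mem_lpBall_of_tendsto hsr.symm.nonneg hu hlim
  have hsum {f : ι → ℝ} (hf : f ∈ lpBall ι r B) := summable_mul_of_mem_lpBall hsr hk0 hk hf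
  have htail : Tendsto (fun F : Finset ι =>
      (∑' x : {x // x ∉ F}, k x ^ s) ^ (1 / s) * (B ^ r) ^ (1 / r)) atTop (𝓝 0) := by
    have h := (tendsto_tsum_compl_atTop_zero fun x => k x ^ s).rpow_const
      (p := 1 / s) (Or.inr hsr.one_div_nonneg)
    simpa [Real.zero_rpow hsr.inv_ne_zero] using h.mul_const ((B ^ r) ^ (1 / r))
  have hunif : TendstoUniformly (fun (F : Finset ι) n => ∑ x ∈ F, k x * u n x)
      (fun n => ∑' x, k x * u n x) atTop := by
    rw [Metric.tendstoUniformly_iff]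
    intro ε hε
    filter_upwards [htail.eventually (gt_mem_nhds hε)] with F hF n
    rw [Real.dist_eq, ← (hsum (hu n)).sum_add_tsum_subtype_compl F, add_sub_cancel_left,
      abs_of_nonneg (tsum_nonneg fun x => mul_nonneg (hk0 _) ((hu n).1 _))]
    exact (tsum_compl_mul_le_of_mem_lpBall hsr hk0 hk (hu n) F).trans_lt hF
  exact hunif.tendsto_of_eventually_tendsto
    (.of_forall fun F => tendsto_finsetSum F fun x _ => (hlim x).const_mul _) (hsum hv).hasSum

end WeakConvergence

/-! ### Word metric -/

section WordMetric

variable [Group G] {S : Finset G}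

/-- `S` is closed under inversion and generates `G`; this makes `wordDist S` the graph distance
rather than a junk infimum over an empty set. -/
structure IsSymmGenerating (S : Finset G) : Prop where
  closure_eq_top : Subgroup.closure (S : Set G) = ⊤
  inv_mem : ∀ s ∈ S, s⁻¹ ∈ S

lemma wordDist_eq_wordDist_one (x y : G) : wordDist S x y = wordDist S 1 (x⁻¹ * y) := by
  simp only [wordDist, one_mul, inv_mul_eq_iff_eq_mul]

lemma wordDist_prod_le (l : List S) : wordDist S 1 (l.map (↑)).prod ≤ l.length :=
  Nat.sInf_le ⟨l.map (↑), fun s hs => by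
    obtain ⟨t, -, rfl⟩ := List.mem_map.1 hs
    exact t.2, List.length_map _, (one_mul _).symm⟩

namespace IsSymmGenerating

lemma exists_word (hS : IsSymmGenerating S) (g : G) :
    ∃ l : List S, l.length = wordDist S 1 g ∧ (l.map (↑)).prod = g := by
  have hg : g ∈ (Subgroup.closure (S : Set G)).toSubmonoid := by
    rw [hS.closure_eq_top]; exact Subgroup.mem_top g
  rw [Subgroup.closure_toSubmonoid] at hg
  obtain ⟨l, hl, rfl⟩ := Submonoid.exists_list_of_mem_closure hg
  have hlS : ∀ s ∈ l, s ∈ S := fun s hs => (hl s hs).elim (fun h => h) fun h => by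
    simpa using hS.inv_mem _ h
  obtain ⟨m, hm, hlen, hprod⟩ := Nat.sInf_mem
    (s := {k | ∃ m : List G, (∀ s ∈ m, s ∈ S) ∧ m.length = k ∧ l.prod = 1 * m.prod})
    ⟨_, l, hlS, rfl, (one_mul _).symm⟩
  lift m to List S using hm
  exact ⟨m, (List.length_map _).symm.trans hlen, by rw [hprod, one_mul]⟩

lemma countable (hS : IsSymmGenerating S) : Countable G :=
  Function.Surjective.countable (f := fun l : List S => (l.map (↑) : List G).prod)
    fun g => (hS.exists_word g).imp fun _ h => h.2

lemma finite_setOf_wordDist_le (hS : IsSymmGenerating S) (n : ℕ) :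
    {x : G | wordDist S 1 x ≤ n}.Finite := by
  refine ((List.finite_length_le S n).image fun l => (l.map (↑) : List G).prod).subset
    fun x hx => ?_
  obtain ⟨l, hl, hx'⟩ := hS.exists_word x
  exact ⟨l, hl.trans_le hx, hx'⟩

/-- The ball of radius `n` about the identity, as a finite set. -/
def ball (hS : IsSymmGenerating S) (n : ℕ) : Finset G := (hS.finite_setOf_wordDist_le n).toFinset

@[simp]
lemma mem_ball (hS : IsSymmGenerating S) {n : ℕ} {x : G} : x ∈ hS.ball n ↔ wordDist S 1 x ≤ n :=
  Set.Finite.mem_toFinset _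

lemma card_ball (hS : IsSymmGenerating S) (n : ℕ) :
    Nat.card {x : G // wordDist S 1 x ≤ n} = (hS.ball n).card :=
  Nat.subtype_card _ fun _ => hS.mem_ball

lemma ball_mono (hS : IsSymmGenerating S) : Monotone hS.ball := fun _ _ h _ hx =>
  hS.mem_ball.2 ((hS.mem_ball.1 hx).trans h)

lemma tendsto_ball (hS : IsSymmGenerating S) : Tendsto hS.ball atTop atTop :=
  tendsto_atTop_finset_of_monotone hS.ball_mono fun x => ⟨wordDist S 1 x, hS.mem_ball.2 le_rfl⟩

lemma eq_one_of_wordDist_eq_zero (hS : IsSymmGenerating S) {g : G} (hg : wordDist S 1 g = 0) :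
    g = 1 := by
  obtain ⟨l, hl, rfl⟩ := hS.exists_word g
  rw [List.length_eq_zero_iff.1 (hl.trans hg), List.map_nil, List.prod_nil]

lemma wordDist_inv_le (hS : IsSymmGenerating S) (g : G) : wordDist S 1 g⁻¹ ≤ wordDist S 1 g := by
  obtain ⟨l, hl, hg⟩ := hS.exists_word g
  have h := wordDist_prod_le (l.reverse.map fun s : S => (⟨(s : G)⁻¹, hS.inv_mem _ s.2⟩ : S))
  rw [List.map_map, List.length_map, List.length_reverse, hl] at h
  convert h
  rw [← hg, List.prod_inv_reverse, List.map_map, ← List.map_reverse]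
  rfl

lemma wordDist_inv (hS : IsSymmGenerating S) (g : G) : wordDist S 1 g⁻¹ = wordDist S 1 g :=
  (hS.wordDist_inv_le g).antisymm (by simpa using hS.wordDist_inv_le g⁻¹)

end IsSymmGenerating

lemma exists_two_mul_card_le_card_ball (hS : IsSymmGenerating S) {N : ℕ} (hN : N ≠ 0) {C₁ : ℝ}
    (hC₁ : 0 < C₁)
    (hlow : ∀ n : ℕ, 1 ≤ n → C₁ * (n : ℝ) ^ N ≤ Nat.card {x : G // wordDist S 1 x ≤ n})
    {Ω : Finset G} (hΩ : Ω.Nonempty) :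
    ∃ n, 2 * Ω.card ≤ (hS.ball n).card ∧
      (n : ℝ) ≤ ((2 / C₁) ^ (1 / (N : ℝ)) + 1) * (Ω.card : ℝ) ^ (1 / (N : ℝ)) := by
  have hcard : (1 : ℝ) ≤ Ω.card := by exact_mod_cast hΩ.card_pos
  have hroot : 0 < (2 / C₁ * Ω.card) ^ (1 / (N : ℝ)) := by positivity
  refine ⟨⌈(2 / C₁ * Ω.card) ^ (1 / (N : ℝ))⌉₊, ?_, ?_⟩
  · set n := ⌈(2 / C₁ * Ω.card) ^ (1 / (N : ℝ))⌉₊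
    have hn : 2 / C₁ * Ω.card ≤ (n : ℝ) ^ N := by
      rw [← Real.rpow_natCast, ← Real.rpow_inv_le_iff_of_pos (by positivity) (by positivity)
        (by positivity), ← one_div]
      exact Nat.le_ceil _
    have h : (2 : ℝ) * Ω.card ≤ (hS.ball n).card := by
      calc (2 : ℝ) * Ω.card = C₁ * (2 / C₁ * Ω.card) := by field_simp
        _ ≤ C₁ * (n : ℝ) ^ N := by gcongr
        _ ≤ (hS.ball n).card := hS.card_ball n ▸ hlow n (Nat.one_le_ceil_iff.2 hroot)
    exact_mod_cast h
  · have h1 := Real.one_le_rpow hcard (z := 1 / (N : ℝ)) (by positivity)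
    have h2 := (Nat.ceil_lt_add_one hroot.le).le
    rw [Real.mul_rpow (by positivity) (by positivity)] at h2 ⊢
    linarith

end WordMetric

/-! ### Isoperimetry and the Sobolev inequality -/

section Isoperimetry

variable [Group G] [DecidableEq G] {S : Finset G}

/-- The number of oriented edges of the Cayley graph leading out of `Ω`. -/
def edgeBoundary (S Ω : Finset G) : ℕ := ∑ s ∈ S, (Ω.filter fun x => x * s ∉ Ω).card

lemma card_filter_mul_prod_notMem_le (l : List S) (Ω : Finset G) :
    (Ω.filter fun x => x * (l.map (↑)).prod ∉ Ω).card ≤ l.length * edgeBoundary S Ω := by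
  induction l with
  | nil => simp
  | cons s l ih =>
    set g : G := (l.map (↑)).prod
    have hsub : (Ω.filter fun x => x * (s * g) ∉ Ω) ⊆
        (Ω.filter fun x => x * (s : G) ∉ Ω) ∪
          ((Ω.filter fun x => x * g ∉ Ω).image (· * (s : G)⁻¹)) := by
      intro x hx
      obtain ⟨hxΩ, hx⟩ := Finset.mem_filter.1 hx
      by_cases hxs : x * (s : G) ∈ Ω
      · refine Finset.mem_union_right _
          (Finset.mem_image.2 ⟨x * (s : G), ?_, mul_inv_cancel_right x _⟩)
        exact Finset.mem_filter.2 ⟨hxs, by rwa [mul_assoc]⟩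
      · exact Finset.mem_union_left _ (Finset.mem_filter.2 ⟨hxΩ, hxs⟩)
    have hs : (Ω.filter fun x => x * (s : G) ∉ Ω).card ≤ edgeBoundary S Ω :=
      Finset.single_le_sum (f := fun s => (Ω.filter fun x => x * s ∉ Ω).card)
        (fun _ _ => Nat.zero_le _) s.2
    rw [List.map_cons, List.prod_cons, List.length_cons, add_mul, one_mul, add_comm]
    exact (Finset.card_le_card hsub).trans <| (Finset.card_union_le _ _).trans <|
      add_le_add hs (Finset.card_image_le.trans ih)

/-- Averaging over `g` in a ball with at least `2 #Ω` elements, at least half of the translates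
`x * g` of a point `x ∈ Ω` leave `Ω`. -/
lemma card_le_two_mul_mul_edgeBoundary (hS : IsSymmGenerating S) {Ω : Finset G} {n : ℕ}
    (hΩ : 2 * Ω.card ≤ (hS.ball n).card) : Ω.card ≤ 2 * (n * edgeBoundary S Ω) := by
  have hcard (x : G) : ((hS.ball n).filter fun g => x * g ∈ Ω).card ≤ Ω.card :=
    Finset.card_le_card_of_injOn (x * ·) (fun g hg => (Finset.mem_filter.1 hg).2)
      (mul_right_injective x).injOn
  have hleave (x : G) : (hS.ball n).card ≤
      2 * ((hS.ball n).filter fun g => x * g ∉ Ω).card := by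
    have := Finset.card_filter_add_card_filter_not (s := hS.ball n) (fun g => x * g ∈ Ω)
    have := hcard x
    omega
  have hexit : ∀ g ∈ hS.ball n, (Ω.filter fun x => x * g ∉ Ω).card ≤ n * edgeBoundary S Ω := by
    intro g hg
    obtain ⟨l, hl, rfl⟩ := hS.exists_word g
    have hln : l.length ≤ n := hl.trans_le (hS.mem_ball.1 hg)
    exact (card_filter_mul_prod_notMem_le l Ω).trans (Nat.mul_le_mul_right _ hln)
  rcases Ω.eq_empty_or_nonempty with rfl | hne
  · simp
  have hpos : 0 < (hS.ball n).card := by have := hne.card_pos; omega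
  refine Nat.le_of_mul_le_mul_right ?_ hpos
  calc Ω.card * (hS.ball n).card
      ≤ ∑ x ∈ Ω, 2 * ((hS.ball n).filter fun g => x * g ∉ Ω).card :=
        Finset.card_nsmul_le_sum _ _ _ fun x _ => hleave x
    _ = 2 * ∑ g ∈ hS.ball n, (Ω.filter fun x => x * g ∉ Ω).card := by
        rw [← Finset.mul_sum]
        simp only [Finset.card_filter]
        rw [Finset.sum_comm]
    _ ≤ 2 * ((hS.ball n).card * (n * edgeBoundary S Ω)) := by
        gcongr; exact Finset.sum_le_card_nsmul _ _ _ hexit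
    _ = 2 * (n * edgeBoundary S Ω) * (hS.ball n).card := by ring

/-- The `d`-dimensional isoperimetric inequality with constant `C`. -/
def IsoperimetricIneq (S : Finset G) (d C : ℝ) : Prop :=
  ∀ Ω : Finset G, (Ω.card : ℝ) ^ (1 - 1 / d) ≤ C * edgeBoundary S Ω

lemma exists_isoperimetricIneq (hS : IsSymmGenerating S) {N : ℕ} (hN : 1 < N)
    {C₁ : ℝ} (hC₁ : 0 < C₁)
    (hlow : ∀ n : ℕ, 1 ≤ n → C₁ * (n : ℝ) ^ N ≤ Nat.card {x : G // wordDist S 1 x ≤ n}) :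
    ∃ C, 0 ≤ C ∧ IsoperimetricIneq S N C := by
  have hN1 : 1 / (N : ℝ) < 1 := by rw [div_lt_one (by positivity)]; exact_mod_cast hN
  refine ⟨2 * ((2 / C₁) ^ (1 / (N : ℝ)) + 1), by positivity, fun Ω => ?_⟩
  rcases Ω.eq_empty_or_nonempty with rfl | hne
  · rw [Finset.card_empty, Nat.cast_zero, Real.zero_rpow (sub_pos.2 hN1).ne']
    positivity
  obtain ⟨n, hball, hn⟩ := exists_two_mul_card_le_card_ball hS (by omega) hC₁ hlow hne
  have hΩ : (0 : ℝ) < Ω.card := by exact_mod_cast hne.card_pos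
  rw [Real.rpow_sub hΩ, Real.rpow_one, div_le_iff₀ (by positivity)]
  calc (Ω.card : ℝ) ≤ 2 * (n * edgeBoundary S Ω) := by
        exact_mod_cast card_le_two_mul_mul_edgeBoundary hS hball
    _ ≤ 2 * (((2 / C₁) ^ (1 / (N : ℝ)) + 1) * (Ω.card : ℝ) ^ (1 / (N : ℝ)) * edgeBoundary S Ω) := by
        gcongr
    _ = _ := by ring

end Isoperimetry

section Sobolev

lemma Memlp.tendsto_cofinite {ι : Type*} {q : ℝ} (hq : 0 < q) {u : ι → ℝ} (hu : Memlp q u) :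
    Tendsto u cofinite (𝓝 0) := by
  rw [tendsto_zero_iff_abs_tendsto_zero]
  have h := hu.tendsto_cofinite_zero.rpow_const (p := q⁻¹) (Or.inr (by positivity))
  rw [Real.zero_rpow (by positivity)] at h
  exact h.congr fun x => Real.rpow_rpow_inv (abs_nonneg _) hq.ne'

lemma Memlp.finite_setOf_lt_rpow {ι : Type*} {q γ t : ℝ} (hq : 0 < q) (hγ : 0 < γ) (ht : 0 < t)
    {u : ι → ℝ} (hu : Memlp q u) : {x | t < |u x| ^ γ}.Finite := by
  have h := (hu.tendsto_cofinite hq).abs.rpow_const (p := γ) (Or.inr hγ.le)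
  rw [abs_zero, Real.zero_rpow hγ.ne'] at h
  exact (eventually_cofinite.1 (h.eventually (gt_mem_nhds ht))).subset fun x hx => hx.le.not_gt

lemma rpow_sub_rpow_le_mul_abs_sub {a b γ : ℝ} (hγ : 1 ≤ γ) (ha : 0 ≤ a) (hb : 0 ≤ b) :
    a ^ γ - b ^ γ ≤ γ * a ^ (γ - 1) * |a - b| := by
  rcases ha.eq_or_lt with rfl | ha
  · rw [Real.zero_rpow (by positivity)]
    have := Real.rpow_nonneg hb γ
    have : 0 ≤ γ * 0 ^ (γ - 1) * |0 - b| := by positivity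
    linarith
  have hbern : 1 + γ * (b / a - 1) ≤ (b / a) ^ γ := by
    have hba : 0 ≤ b / a := by positivity
    have h : -1 ≤ b / a - 1 := by linarith
    simpa using one_add_mul_self_le_rpow_one_add h hγ
  rw [Real.div_rpow hb ha.le, le_div_iff₀ (by positivity)] at hbern
  calc a ^ γ - b ^ γ ≤ a ^ γ - (1 + γ * (b / a - 1)) * a ^ γ := by linarith
    _ = γ * a ^ (γ - 1) * (a - b) := by rw [Real.rpow_sub_one ha.ne']; field_simp; ring
    _ ≤ γ * a ^ (γ - 1) * |a - b| := by gcongr; exact le_abs_self _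

open MeasureTheory ENNReal

variable [Group G] {S : Finset G} {d C : ℝ}

lemma gradSq_nonneg (S : Finset G) (u : G → ℝ) (x : G) : 0 ≤ gradSq S u x :=
  Finset.sum_nonneg fun _ _ => sq_nonneg _

/-- The Dirichlet energy `‖u‖²_{D^{1,2}}`. -/
def dirichlet (S : Finset G) (u : G → ℝ) : ℝ := ∑' x, gradSq S u x

lemma dirichlet_nonneg (S : Finset G) (u : G → ℝ) : 0 ≤ dirichlet S u :=
  tsum_nonneg (gradSq_nonneg S u)

lemma D12Norm_nonneg (S : Finset G) (u : G → ℝ) : 0 ≤ D12Norm S u :=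
  Real.rpow_nonneg (dirichlet_nonneg S u) _

lemma D12Norm_sq (S : Finset G) (u : G → ℝ) : D12Norm S u ^ 2 = dirichlet S u := by
  rw [D12Norm, ← Real.sqrt_eq_rpow]
  exact Real.sq_sqrt (dirichlet_nonneg S u)

lemma tsum_rpow_half_mul_abs_sub_le {q : ℝ} {w : G → ℝ} (hw : Memlp q w)
    (hgrad : Summable (gradSq S w)) {s : G} (hs : s ∈ S) :
    Summable (fun x => |w x| ^ (q / 2) * |w (x * s) - w x|) ∧
      ∑' x, |w x| ^ (q / 2) * |w (x * s) - w x| ≤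
        (∑' x, |w x| ^ q) ^ (1 / 2 : ℝ) * D12Norm S w := by
  have hle (x : G) : |w (x * s) - w x| ^ (2 : ℝ) ≤ gradSq S w x := by
    rw [Real.rpow_two, sq_abs]
    exact Finset.single_le_sum (f := fun s => (w (x * s) - w x) ^ 2) (fun _ _ => sq_nonneg _) hs
  have hsum := Summable.of_nonneg_of_le (fun x => by positivity) hle hgrad
  have hpow (x : G) : (|w x| ^ (q / 2)) ^ (2 : ℝ) = |w x| ^ q := by
    rw [← Real.rpow_mul (abs_nonneg _), div_mul_cancel₀ q two_ne_zero]
  have hwq : Summable fun x => (|w x| ^ (q / 2)) ^ (2 : ℝ) := by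
    simpa only [hpow, Memlp] using hw
  refine ⟨Real.summable_mul_of_Lp_Lq_of_nonneg .two_two (fun _ => by positivity)
    (fun _ => by positivity) hwq hsum, ?_⟩
  refine (Real.inner_le_Lp_mul_Lq_tsum_of_nonneg .two_two (fun _ => by positivity)
    (fun _ => by positivity) hwq hsum).trans ?_
  simp only [hpow]
  gcongr
  exact Real.rpow_le_rpow (tsum_nonneg fun x => by positivity) (hsum.tsum_le_tsum hle hgrad)
    (by norm_num)

lemma IsoperimetricIneq.sum_le [DecidableEq G] (hiso : IsoperimetricIneq S d C) (hd : 1 < d)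
    (Ω : Finset G) (φ : G → ℝ≥0∞) :
    ∑ x ∈ Ω, φ x ≤ ENNReal.ofReal C * (∑' x, φ x ^ d) ^ (1 / d) * edgeBoundary S Ω := by
  have hconj := Real.HolderConjugate.conjExponent hd
  have hexp : 1 / d.conjExponent = 1 - 1 / d := by
    simpa only [one_div] using hconj.one_sub_inv.symm
  calc ∑ x ∈ Ω, φ x = ∑ x ∈ Ω, φ x * 1 := by simp only [mul_one]
    _ ≤ (∑ x ∈ Ω, φ x ^ d) ^ (1 / d) * (Ω.card : ℝ≥0∞) ^ (1 - 1 / d) := by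
        refine (ENNReal.inner_le_Lp_mul_Lq Ω φ (fun _ => 1) hconj).trans_eq ?_
        simp only [ENNReal.one_rpow, Finset.sum_const, nsmul_eq_mul, mul_one, hexp]
    _ ≤ (∑' x, φ x ^ d) ^ (1 / d) * (ENNReal.ofReal C * edgeBoundary S Ω) := by
        gcongr
        · exact ENNReal.sum_le_tsum Ω
        · rw [← ENNReal.ofReal_natCast, ← ENNReal.ofReal_natCast,
            ENNReal.ofReal_rpow_of_nonneg (by positivity) (hexp ▸ hconj.symm.one_div_nonneg),
            ← ENNReal.ofReal_mul' (by positivity)]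
          exact ENNReal.ofReal_le_ofReal (hiso Ω)
    _ = _ := by ring

lemma IsoperimetricIneq.tsum_superlevel_le [DecidableEq G] (hiso : IsoperimetricIneq S d C)
    (hd : 1 < d) {g : G → ℝ} {t : ℝ} (hfin : {x | t < g x}.Finite) (φ : G → ℝ≥0∞) :
    ∑' x, (Set.Iio (g x)).indicator (fun _ => φ x) t ≤
      ENNReal.ofReal C * (∑' x, φ x ^ d) ^ (1 / d) *
        ∑ s ∈ S, ∑' x, (Set.Ico (g (x * s)) (g x)).indicator 1 t := by
  set Ω := hfin.toFinset
  have hΩ {x : G} : x ∈ Ω ↔ t < g x := hfin.mem_toFinset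
  have hleft : ∑' x, (Set.Iio (g x)).indicator (fun _ => φ x) t = ∑ x ∈ Ω, φ x := by
    rw [tsum_eq_sum (s := Ω) fun x hx =>
      Set.indicator_of_notMem (s := Set.Iio (g x)) (fun h => hx (hΩ.2 h)) _]
    exact Finset.sum_congr rfl fun x hx => Set.indicator_of_mem (s := Set.Iio (g x)) (hΩ.1 hx) _
  have hright : (edgeBoundary S Ω : ℝ≥0∞) ≤
      ∑ s ∈ S, ∑' x, (Set.Ico (g (x * s)) (g x)).indicator 1 t := by
    rw [edgeBoundary, Nat.cast_sum]
    refine Finset.sum_le_sum fun s _ => ?_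
    rw [Finset.cast_card]
    refine (Finset.sum_le_sum fun x hx => ?_).trans (ENNReal.sum_le_tsum _)
    obtain ⟨hx, hxs⟩ := Finset.mem_filter.1 hx
    exact (Set.indicator_of_mem (s := Set.Ico (g (x * s)) (g x))
      ⟨not_lt.1 fun h => hxs (hΩ.2 h), hΩ.1 hx⟩ (1 : ℝ → ℝ≥0∞)).ge
  rw [hleft]
  exact (hiso.sum_le hd Ω φ).trans (by gcongr)

/-- Apply the isoperimetric inequality to each superlevel set `{t < g}` and integrate over `t`. -/
lemma IsoperimetricIneq.tsum_mul_le [DecidableEq G] [Countable G] (hiso : IsoperimetricIneq S d C)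
    (hd : 1 < d) {g : G → ℝ} (hfin : ∀ t > 0, {x | t < g x}.Finite) (φ : G → ℝ≥0∞) :
    ∑' x, ENNReal.ofReal (g x) * φ x ≤
      ENNReal.ofReal C * (∑' x, φ x ^ d) ^ (1 / d) *
        ∑ s ∈ S, ∑' x, ENNReal.ofReal (g x - g (x * s)) := by
  set ν := (volume : Measure ℝ).restrict (Set.Ioi 0)
  have hleft (x : G) : ENNReal.ofReal (g x) * φ x =
      ∫⁻ t, (Set.Iio (g x)).indicator (fun _ => φ x) t ∂ν := by
    rw [lintegral_indicator_const measurableSet_Iio, Measure.restrict_apply measurableSet_Iio,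
      Set.Iio_inter_Ioi, Real.volume_Ioo, sub_zero, mul_comm]
  have hright (s x : G) : ∫⁻ t, (Set.Ico (g (x * s)) (g x)).indicator 1 t ∂ν ≤
      ENNReal.ofReal (g x - g (x * s)) := by
    rw [lintegral_indicator_one measurableSet_Ico]
    exact (Measure.restrict_apply_le _ _).trans_eq Real.volume_Ico
  have hmeas (s x : G) :
      Measurable ((Set.Ico (g (x * s)) (g x)).indicator (1 : ℝ → ℝ≥0∞)) :=
    measurable_one.indicator measurableSet_Ico
  calc ∑' x, ENNReal.ofReal (g x) * φ x
      = ∫⁻ t, ∑' x, (Set.Iio (g x)).indicator (fun _ => φ x) t ∂ν := by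
        rw [lintegral_tsum fun x => (measurable_const.indicator measurableSet_Iio).aemeasurable]
        exact tsum_congr hleft
    _ ≤ ∫⁻ t, ENNReal.ofReal C * (∑' x, φ x ^ d) ^ (1 / d) *
          ∑ s ∈ S, ∑' x, (Set.Ico (g (x * s)) (g x)).indicator 1 t ∂ν :=
        setLIntegral_mono' measurableSet_Ioi fun t ht => hiso.tsum_superlevel_le hd (hfin t ht) φ
    _ = ENNReal.ofReal C * (∑' x, φ x ^ d) ^ (1 / d) *
          ∑ s ∈ S, ∑' x, ∫⁻ t, (Set.Ico (g (x * s)) (g x)).indicator 1 t ∂ν := by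
        rw [lintegral_const_mul _ (Finset.measurable_fun_sum _ fun s _ =>
            Measurable.tsum fun x => hmeas s x),
          lintegral_finsetSum _ fun s _ => Measurable.tsum fun x => hmeas s x]
        simp only [lintegral_tsum fun x => (hmeas _ x).aemeasurable]
    _ ≤ _ := by gcongr; exact hright _ _

lemma tsum_ofReal_rpow_sub_le {q γ : ℝ} (hγ : 1 ≤ γ) (hq : γ - 1 = q / 2) {w : G → ℝ}
    (hw : Memlp q w) (hgrad : Summable (gradSq S w)) {s : G} (hs : s ∈ S) :
    ∑' x, ENNReal.ofReal (|w x| ^ γ - |w (x * s)| ^ γ) ≤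
      ENNReal.ofReal (γ * ((∑' x, |w x| ^ q) ^ (1 / 2 : ℝ) * D12Norm S w)) := by
  obtain ⟨hsum, hle⟩ := tsum_rpow_half_mul_abs_sub_le hw hgrad hs
  have hpt (x : G) : |w x| ^ γ - |w (x * s)| ^ γ ≤
      γ * (|w x| ^ (q / 2) * |w (x * s) - w x|) := by
    rw [← hq, ← mul_assoc, abs_sub_comm (w (x * s))]
    exact (rpow_sub_rpow_le_mul_abs_sub hγ (abs_nonneg _) (abs_nonneg _)).trans
      (mul_le_mul_of_nonneg_left (abs_abs_sub_abs_le (w x) (w (x * s))) (by positivity))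
  calc ∑' x, ENNReal.ofReal (|w x| ^ γ - |w (x * s)| ^ γ)
      ≤ ∑' x, ENNReal.ofReal (γ * (|w x| ^ (q / 2) * |w (x * s) - w x|)) :=
        ENNReal.tsum_le_tsum fun x => ENNReal.ofReal_le_ofReal (hpt x)
    _ = ENNReal.ofReal (γ * ∑' x, |w x| ^ (q / 2) * |w (x * s) - w x|) := by
        rw [← tsum_mul_left, ENNReal.ofReal_tsum_of_nonneg (fun x => by positivity)
          (hsum.mul_left γ)]
    _ ≤ _ := ENNReal.ofReal_le_ofReal (by gcongr)

lemma IsoperimetricIneq.tsum_rpow_le [DecidableEq G] [Countable G] (hiso : IsoperimetricIneq S d C)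
    (hC : 0 ≤ C) (hd : 2 < d) {w : G → ℝ} (hw : Memlp (2 * d / (d - 2)) w)
    (hgrad : Summable (gradSq S w)) :
    ∑' x, |w x| ^ (2 * d / (d - 2)) ≤ C * (∑' x, |w x| ^ (2 * d / (d - 2))) ^ (1 / d) *
      (S.card * (2 * (d - 1) / (d - 2) *
        ((∑' x, |w x| ^ (2 * d / (d - 2))) ^ (1 / 2 : ℝ) * D12Norm S w))) := by
  have hd2 : 0 < d - 2 := sub_pos.2 hd
  set q := 2 * d / (d - 2) with hq
  set γ := 2 * (d - 1) / (d - 2) with hγ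
  have hγ1 : 1 ≤ γ := by rw [hγ, le_div_iff₀ hd2]; linarith
  have hγq : γ - 1 = q / 2 := by rw [hγ, hq]; field_simp; ring
  set X := ∑' x, |w x| ^ q with hX
  have hX0 : 0 ≤ X := tsum_nonneg fun x => by positivity
  have hXφ : ENNReal.ofReal X =
      ∑' x, ENNReal.ofReal (|w x| ^ γ) * ENNReal.ofReal (|w x| ^ (2 / (d - 2))) := by
    rw [ENNReal.ofReal_tsum_of_nonneg (fun x => by positivity) hw]
    refine tsum_congr fun x => ?_
    rw [← ENNReal.ofReal_mul (by positivity),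
      ← Real.rpow_add_of_nonneg (abs_nonneg _) (by positivity) (by positivity)]
    congr 2
    rw [hq, hγ]; field_simp; ring
  have hφ : ∑' x, ENNReal.ofReal (|w x| ^ (2 / (d - 2))) ^ d = ENNReal.ofReal X := by
    rw [ENNReal.ofReal_tsum_of_nonneg (fun x => by positivity) hw]
    refine tsum_congr fun x => ?_
    rw [ENNReal.ofReal_rpow_of_nonneg (by positivity) (by positivity),
      ← Real.rpow_mul (abs_nonneg _), div_mul_eq_mul_div]
  have hD0 : 0 ≤ D12Norm S w := D12Norm_nonneg S w
  have key := hiso.tsum_mul_le (by linarith)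
    (fun t ht => hw.finite_setOf_lt_rpow (γ := γ) (by positivity) (by positivity) ht)
    fun x => ENNReal.ofReal (|w x| ^ (2 / (d - 2)))
  rw [← hXφ, hφ, ENNReal.ofReal_rpow_of_nonneg hX0 (by positivity)] at key
  rw [← ENNReal.ofReal_le_ofReal_iff (by positivity)]
  refine key.trans ((mul_le_mul_right (Finset.sum_le_card_nsmul _ _ _
    fun s hs => tsum_ofReal_rpow_sub_le hγ1 hγq hw hgrad hs) _).trans_eq ?_)
  rw [nsmul_eq_mul, ← ENNReal.ofReal_natCast,
    ENNReal.ofReal_mul (p := C * X ^ (1 / d)) (by positivity), ENNReal.ofReal_mul hC,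
    ENNReal.ofReal_mul (p := (S.card : ℝ)) (by positivity)]

lemma IsoperimetricIneq.lpNorm_le [DecidableEq G] [Countable G] (hiso : IsoperimetricIneq S d C)
    (hC : 0 ≤ C) (hd : 2 < d) {w : G → ℝ} (hw : Memlp (2 * d / (d - 2)) w)
    (hgrad : Summable (gradSq S w)) :
    lpNorm (2 * d / (d - 2)) w ≤ C * S.card * (2 * (d - 1) / (d - 2)) * D12Norm S w := by
  have hd2 : 0 < d - 2 := sub_pos.2 hd
  have hD0 : 0 ≤ D12Norm S w := D12Norm_nonneg S w
  have key := hiso.tsum_rpow_le hC hd hw hgrad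
  rw [lpNorm]
  set X := ∑' x, |w x| ^ (2 * d / (d - 2))
  have hX0 : 0 ≤ X := tsum_nonneg fun x => by positivity
  rcases hX0.eq_or_lt with h0 | h0
  · have h1 : 0 < d - 1 := by linarith
    rw [← h0, Real.zero_rpow (by positivity)]
    positivity
  have hexp : X ^ (1 / (2 * d / (d - 2))) = X / (X ^ (1 / d) * X ^ (1 / 2 : ℝ)) := by
    rw [← Real.rpow_add h0, _root_.eq_div_iff (by positivity), ← Real.rpow_add h0]
    convert Real.rpow_one X using 2
    field_simp; ring
  rw [hexp, div_le_iff₀ (by positivity)]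
  exact key.trans_eq (by ring)

end Sobolev

/-! ### The Hardy–Littlewood–Sobolev inequality -/

section Packing

lemma sum_le_of_fiber_le_geometric {ι : Type*} {φ : ι → ℝ} {F : Finset ι} {k : ι → ℕ} {D b : ℝ}
    (hD : 0 ≤ D) (hb : 0 ≤ b) (hb1 : b < 1)
    (h : ∀ j, ∑ x ∈ F with k x = j, φ x ≤ D * b ^ j) : ∑ x ∈ F, φ x ≤ D * (1 - b)⁻¹ := by
  calc ∑ x ∈ F, φ x = ∑ j ∈ F.image k, ∑ x ∈ F with k x = j, φ x :=
        (Finset.sum_fiberwise_of_maps_to (fun x hx => Finset.mem_image_of_mem k hx) φ).symm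
    _ ≤ ∑ j ∈ F.image k, D * b ^ j := Finset.sum_le_sum fun j _ => h j
    _ ≤ ∑' j, D * b ^ j := ((summable_geometric_of_lt_one hb hb1).mul_left D).sum_le_tsum _
        fun j _ => by positivity
    _ = D * (1 - b)⁻¹ := by rw [tsum_mul_left, tsum_geometric_of_lt_one hb hb1]

variable [Group G] {S : Finset G} {d e C ρ : ℝ} {x : G} {F : Finset G}

/-- The word metric, raised to `1` on the diagonal so that its negative powers make sense there. -/
def regDist (S : Finset G) (x y : G) : ℝ := max 1 (wordDist S x y)

lemma regDist_pos (S : Finset G) (x y : G) : 0 < regDist S x y := one_pos.trans_le (le_max_left _ _)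

lemma regDist_comm (hS : IsSymmGenerating S) (x y : G) : regDist S x y = regDist S y x := by
  rw [regDist, regDist, wordDist_eq_wordDist_one x y, wordDist_eq_wordDist_one y x,
    ← hS.wordDist_inv, mul_inv_rev, inv_inv]

/-- Balls of radius `σ` contain at most `C σ ^ d` points. -/
def PackingBound (S : Finset G) (d C : ℝ) : Prop :=
  ∀ (x : G) (F : Finset G) (σ : ℝ), 0 < σ → (∀ y ∈ F, regDist S x y ≤ σ) → F.card ≤ C * σ ^ d

lemma IsSymmGenerating.packingBound (hS : IsSymmGenerating S) {N : ℕ}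
    (hup : ∀ n : ℕ, 1 ≤ n → (Nat.card {x : G // wordDist S 1 x ≤ n} : ℝ) ≤ C * (n : ℝ) ^ N) :
    PackingBound S N C := by
  have hC : 0 ≤ C := by simpa using (Nat.cast_nonneg _).trans (hup 1 le_rfl)
  intro x F σ hσ hF
  rcases F.eq_empty_or_nonempty with rfl | ⟨y, hy⟩
  · rw [Finset.card_empty, Nat.cast_zero]; positivity
  have hσ1 : 1 ≤ σ := (le_max_left _ _).trans (hF y hy)
  have hcard : F.card ≤ (hS.ball ⌊σ⌋₊).card :=
    Finset.card_le_card_of_injOn (x⁻¹ * ·) (fun z hz => hS.mem_ball.2 <|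
      Nat.le_floor <| wordDist_eq_wordDist_one x z ▸ (le_max_right _ _).trans (hF z hz))
      (mul_right_injective _).injOn
  calc (F.card : ℝ) ≤ (hS.ball ⌊σ⌋₊).card := by exact_mod_cast hcard
    _ ≤ C * (⌊σ⌋₊ : ℝ) ^ N := hS.card_ball _ ▸ hup _ ((Nat.one_le_floor_iff σ).2 hσ1)
    _ ≤ C * σ ^ (N : ℝ) := by rw [Real.rpow_natCast]; gcongr; exact Nat.floor_le hσ.le

namespace PackingBound

lemma const_nonneg (hP : PackingBound S d C) : 0 ≤ C := by
  simpa using hP 1 ∅ 1 one_pos (by simp)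

lemma sum_shell_le (hP : PackingBound S d C) (hed : e ≤ d) (hρ : 0 < ρ)
    (hF : ∀ y ∈ F, ρ ≤ regDist S x y ∧ regDist S x y ≤ 2 * ρ) :
    ∑ y ∈ F, regDist S x y ^ (e - d) ≤ C * 2 ^ d * ρ ^ e := by
  calc ∑ y ∈ F, regDist S x y ^ (e - d) ≤ ∑ _y ∈ F, ρ ^ (e - d) := Finset.sum_le_sum fun y hy =>
        Real.rpow_le_rpow_of_nonpos hρ (hF y hy).1 (sub_nonpos.2 hed)
    _ = F.card * ρ ^ (e - d) := by rw [Finset.sum_const, nsmul_eq_mul]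
    _ ≤ C * (2 * ρ) ^ d * ρ ^ (e - d) := by
        gcongr; exact hP x F (2 * ρ) (by positivity) fun y hy => (hF y hy).2
    _ = C * 2 ^ d * ρ ^ e := by
        rw [Real.mul_rpow two_pos.le hρ.le, Real.rpow_sub hρ]; field_simp

lemma sum_near_le (hP : PackingBound S d C) (he : 0 < e) (hed : e ≤ d) (hρ : 0 < ρ)
    (hF : ∀ y ∈ F, regDist S x y ≤ ρ) :
    ∑ y ∈ F, regDist S x y ^ (e - d) ≤ C * 2 ^ d * (1 - 2 ^ (-e))⁻¹ * ρ ^ e := by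
  have hC := hP.const_nonneg
  have hk (y : G) : ∃ k : ℕ, y ∈ F → (2 : ℝ) ^ k ≤ ρ / regDist S x y ∧
      ρ / regDist S x y < 2 ^ (k + 1) := by
    by_cases hy : y ∈ F
    · exact (exists_nat_pow_near ((one_le_div (regDist_pos S x y)).2 (hF y hy)) one_lt_two).imp
        fun _ h _ => h
    · exact ⟨0, fun h => absurd h hy⟩
  choose k hk using hk
  have hfib (j : ℕ) : ∑ y ∈ F with k y = j, regDist S x y ^ (e - d) ≤
      C * 2 ^ d * ρ ^ e * (2 ^ (-e)) ^ j := by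
    refine (hP.sum_shell_le (ρ := ρ / 2 ^ (j + 1)) hed (by positivity) fun y hy => ?_).trans ?_
    · obtain ⟨hyF, rfl⟩ := Finset.mem_filter.1 hy
      have hpos := regDist_pos S x y
      obtain ⟨h1, h2⟩ := hk y hyF
      rw [le_div_iff₀ hpos] at h1
      rw [div_lt_iff₀ hpos] at h2
      constructor
      · rw [div_le_iff₀ (by positivity)]; linarith
      · rw [pow_succ, mul_div_assoc', mul_comm (2 : ℝ) ρ, mul_div_mul_right _ _ two_ne_zero,
          le_div_iff₀ (by positivity)]
        linarith
    · rw [mul_assoc (C * 2 ^ d), Real.rpow_neg two_pos.le, inv_pow, Real.rpow_pow_comm two_pos.le,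
        ← div_eq_mul_inv, ← Real.div_rpow hρ.le (by positivity)]
      gcongr
      exacts [one_le_two, j.le_succ]
  refine (sum_le_of_fiber_le_geometric (by positivity) (by positivity)
    (Real.rpow_lt_one_of_one_lt_of_neg one_lt_two (neg_neg_of_pos he)) hfib).trans_eq (by ring)

lemma sum_far_le (hP : PackingBound S d C) (he : e < 0) (hed : e ≤ d) (hρ : 0 < ρ)
    (hF : ∀ y ∈ F, ρ ≤ regDist S x y) :
    ∑ y ∈ F, regDist S x y ^ (e - d) ≤ C * 2 ^ d * (1 - 2 ^ e)⁻¹ * ρ ^ e := by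
  have hC := hP.const_nonneg
  have hk (y : G) : ∃ k : ℕ, y ∈ F → (2 : ℝ) ^ k ≤ regDist S x y / ρ ∧
      regDist S x y / ρ < 2 ^ (k + 1) := by
    by_cases hy : y ∈ F
    · exact (exists_nat_pow_near ((one_le_div hρ).2 (hF y hy)) one_lt_two).imp fun _ h _ => h
    · exact ⟨0, fun h => absurd h hy⟩
  choose k hk using hk
  have hfib (j : ℕ) : ∑ y ∈ F with k y = j, regDist S x y ^ (e - d) ≤
      C * 2 ^ d * ρ ^ e * (2 ^ e) ^ j := by
    refine (hP.sum_shell_le (ρ := 2 ^ j * ρ) hed (by positivity) fun y hy => ?_).trans_eq ?_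
    · obtain ⟨hyF, rfl⟩ := Finset.mem_filter.1 hy
      obtain ⟨h1, h2⟩ := hk y hyF
      rw [div_lt_iff₀ hρ] at h2
      exact ⟨(le_div_iff₀ hρ).1 h1, h2.le.trans_eq (by ring)⟩
    · rw [Real.mul_rpow (by positivity) hρ.le, ← Real.rpow_pow_comm two_pos.le]
      ring
  refine (sum_le_of_fiber_le_geometric (by positivity) (by positivity)
    (Real.rpow_lt_one_of_one_lt_of_neg one_lt_two he) hfib).trans_eq (by ring)

end PackingBound

end Packing

section HardyLittlewoodSobolev

variable [Group G] {S : Finset G} {d α c C B : ℝ}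

lemma holderConjugate_two_mul_div (hd : 0 < d) (hα : 0 < α) (hαd : α < d) :
    (2 * d / (d - α)).HolderConjugate (2 * d / (d + α)) := by
  have h : 0 < d - α := sub_pos.2 hαd
  refine Real.holderConjugate_iff.2 ⟨(one_lt_div h).2 (by linarith), ?_⟩
  field_simp
  ring

lemma regDist_rpow_rpow (hαd : α < d) (x y : G) :
    (regDist S x y ^ (α - d)) ^ (2 * d / (d - α)) = regDist S x y ^ (-d - d) := by
  rw [← Real.rpow_mul (regDist_pos S x y).le]
  congr 1
  field_simp [(sub_pos.2 hαd).ne']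
  ring

lemma PackingBound.sum_far_mul_le (hP : PackingBound S d C) (hα : 0 < α) (hαd : α < d)
    {f : G → ℝ} (hB : 0 ≤ B) (hf : f ∈ lpBall G (2 * d / (d + α)) B) {ρ : ℝ} (hρ : 0 < ρ)
    {x : G} {F : Finset G} (hF : ∀ y ∈ F, ρ ≤ regDist S x y) :
    ∑ y ∈ F, regDist S x y ^ (α - d) * f y ≤
      (C * 2 ^ d * (1 - 2 ^ (-d))⁻¹) ^ ((d - α) / (2 * d)) * (ρ ^ (-((d - α) / 2)) * B) := by
  have hd : 0 < d := hα.trans hαd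
  have hconj := holderConjugate_two_mul_div hd hα hαd
  have hsum := hP.sum_far_le (neg_neg_of_pos hd) (by linarith) hρ hF
  have hA : 0 ≤ C * 2 ^ d * (1 - 2 ^ (-d))⁻¹ := by
    have := Real.rpow_le_one_of_one_le_of_nonpos one_le_two (neg_nonpos.2 hd.le)
    exact mul_nonneg (mul_nonneg hP.const_nonneg (by positivity)) (inv_nonneg.2 (sub_nonneg.2 this))
  refine (Real.inner_le_Lp_mul_Lq_of_nonneg F hconj (fun y _ => Real.rpow_nonneg
    (regDist_pos S x y).le _) (fun y _ => hf.1 y)).trans ?_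
  simp only [regDist_rpow_rpow hαd]
  calc (∑ y ∈ F, regDist S x y ^ (-d - d)) ^ (1 / (2 * d / (d - α))) *
        (∑ y ∈ F, f y ^ (2 * d / (d + α))) ^ (1 / (2 * d / (d + α)))
      ≤ (C * 2 ^ d * (1 - 2 ^ (-d))⁻¹ * ρ ^ (-d)) ^ (1 / (2 * d / (d - α))) *
        (B ^ (2 * d / (d + α))) ^ (1 / (2 * d / (d + α))) :=
        mul_le_mul
          (Real.rpow_le_rpow
            (Finset.sum_nonneg fun y _ => Real.rpow_nonneg (regDist_pos S x y).le _)
            hsum hconj.one_div_nonneg)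
          (Real.rpow_le_rpow (Finset.sum_nonneg fun y _ => Real.rpow_nonneg (hf.1 y) _) (hf.2 F)
            hconj.symm.one_div_nonneg)
          (Real.rpow_nonneg (Finset.sum_nonneg fun y _ => Real.rpow_nonneg (hf.1 y) _) _)
          (by positivity)
    _ = _ := by
        rw [one_div (2 * d / (d + α)), Real.rpow_rpow_inv hB hconj.symm.ne_zero, one_div_div,
          Real.mul_rpow hA (by positivity), ← Real.rpow_mul hρ.le, mul_assoc]
        congr 3
        field_simp

/-- The near part of the sum is bounded by `f ≤ t` and the far part by Hölder's inequality; the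
radius `u ^ (2 / (d + α))` balances the two. -/
lemma PackingBound.exists_mul_sum_le (hP : PackingBound S d C) (hα : 0 < α) (hαd : α < d) :
    ∃ A, 0 ≤ A ∧ ∀ (f : G → ℝ) (t u : ℝ) (x : G) (F : Finset G), 0 < t → 1 ≤ u →
      f ∈ lpBall G (2 * d / (d + α)) (u * t) → (∀ y ∈ F, f y ≤ t) →
      t * ∑ y ∈ F, regDist S x y ^ (α - d) * f y ≤ A * (u ^ (2 * α / (d + α)) * t ^ (2 : ℝ)) := by
  have hd : 0 < d := hα.trans hαd
  have hC := hP.const_nonneg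
  have hlt {e : ℝ} (he : 0 < e) : 0 ≤ (1 - (2 : ℝ) ^ (-e))⁻¹ := inv_nonneg.2 <| sub_nonneg.2 <|
    Real.rpow_le_one_of_one_le_of_nonpos one_le_two (neg_nonpos.2 he.le)
  set A₁ := C * 2 ^ d * (1 - 2 ^ (-α))⁻¹
  set A₂ := (C * 2 ^ d * (1 - 2 ^ (-d))⁻¹) ^ ((d - α) / (2 * d))
  have hA₁ : 0 ≤ A₁ := mul_nonneg (by positivity) (hlt hα)
  have hA₂ : 0 ≤ A₂ := Real.rpow_nonneg (mul_nonneg (by positivity) (hlt hd)) _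
  refine ⟨A₁ + A₂, by positivity, fun f t u x F ht hu hf hF => ?_⟩
  have hu0 : 0 < u := one_pos.trans_le hu
  set ρ := u ^ (2 / (d + α)) with hρ
  have hρ0 : 0 < ρ := by positivity
  have hnear : ∑ y ∈ F with regDist S x y ≤ ρ, regDist S x y ^ (α - d) * f y ≤ A₁ * ρ ^ α * t := by
    refine (Finset.sum_le_sum fun y hy => mul_le_mul_of_nonneg_left
      (hF y (Finset.mem_filter.1 hy).1) (Real.rpow_nonneg (regDist_pos S x y).le _)).trans ?_
    rw [← Finset.sum_mul]
    exact mul_le_mul_of_nonneg_right (hP.sum_near_le hα hαd.le hρ0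
      fun y hy => (Finset.mem_filter.1 hy).2) ht.le
  have hfar := hP.sum_far_mul_le hα hαd (by positivity) hf hρ0 (x := x)
    (F := F.filter fun y => ¬ regDist S x y ≤ ρ)
    fun y hy => (not_le.1 (Finset.mem_filter.1 hy).2).le
  have hbalance : ρ ^ (-((d - α) / 2)) * u = ρ ^ α := by
    rw [hρ, ← Real.rpow_mul hu0.le, ← Real.rpow_mul hu0.le, ← Real.rpow_add_one hu0.ne']
    congr 1; field_simp; ring
  have hρα : ρ ^ α = u ^ (2 * α / (d + α)) := by
    rw [hρ, ← Real.rpow_mul hu0.le, div_mul_eq_mul_div]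
  calc t * ∑ y ∈ F, regDist S x y ^ (α - d) * f y
      ≤ t * (A₁ * ρ ^ α * t + A₂ * (ρ ^ (-((d - α) / 2)) * (u * t))) := by
        rw [← Finset.sum_filter_add_sum_filter_not F fun y => regDist S x y ≤ ρ]
        gcongr
    _ = (A₁ + A₂) * (u ^ (2 * α / (d + α)) * t ^ (2 : ℝ)) := by
        rw [← mul_assoc (ρ ^ _), hbalance, hρα, Real.rpow_two]; ring

lemma PackingBound.exists_mul_sum_le_rpow (hP : PackingBound S d C) (hα : 0 < α) (hαd : α < d) :
    ∃ A, 0 ≤ A ∧ ∀ (f : G → ℝ) (B : ℝ) (x : G) (F : Finset G), 0 ≤ B →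
      f ∈ lpBall G (2 * d / (d + α)) B → (∀ y ∈ F, f y ≤ f x) →
      f x * ∑ y ∈ F, regDist S x y ^ (α - d) * f y ≤
        A * B ^ (2 * α / (d + α)) * f x ^ (2 * d / (d + α)) := by
  have hd : 0 < d := hα.trans hαd
  obtain ⟨A, hA, h⟩ := hP.exists_mul_sum_le hα hαd
  refine ⟨A, hA, fun f B x F hB hf hF => ?_⟩
  rcases (hf.1 x).eq_or_lt with h0 | h0
  · rw [← h0, Real.zero_rpow (by positivity), zero_mul, mul_zero]
  have hxB := le_of_mem_lpBall (by positivity) hB hf x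
  refine (h f (f x) (B / f x) x F h0 ((one_le_div h0).2 hxB)
    ((div_mul_cancel₀ B h0.ne').symm ▸ hf) hF).trans_eq ?_
  have hpow : f x ^ (2 : ℝ) = f x ^ (2 * α / (d + α)) * f x ^ (2 * d / (d + α)) := by
    rw [← Real.rpow_add h0]; congr 1; field_simp; ring
  rw [Real.div_rpow hB h0.le, hpow]
  field_simp

/-- By symmetry of the kernel it suffices to sum over the pairs with `f y ≤ f x`. -/
lemma PackingBound.exists_sum_sum_le (hP : PackingBound S d C) (hS : IsSymmGenerating S)
    (hα : 0 < α) (hαd : α < d) :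
    ∃ A, 0 ≤ A ∧ ∀ (f : G → ℝ) (B : ℝ) (F : Finset G), 0 ≤ B →
      f ∈ lpBall G (2 * d / (d + α)) B →
      ∑ x ∈ F, ∑ y ∈ F, regDist S x y ^ (α - d) * f y * f x ≤ A * B ^ 2 := by
  have hd : 0 < d := hα.trans hαd
  obtain ⟨A, hA, h⟩ := hP.exists_mul_sum_le_rpow hα hαd
  refine ⟨2 * A, by positivity, fun f B F hB hf => ?_⟩
  have hterm (x y : G) : 0 ≤ regDist S x y ^ (α - d) * f y * f x :=
    mul_nonneg (mul_nonneg (Real.rpow_nonneg (regDist_pos S x y).le _) (hf.1 y)) (hf.1 x)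
  have hhalf :
      ∑ x ∈ F, ∑ y ∈ F with f y ≤ f x, regDist S x y ^ (α - d) * f y * f x ≤ A * B ^ 2 := by
    calc ∑ x ∈ F, ∑ y ∈ F with f y ≤ f x, regDist S x y ^ (α - d) * f y * f x
        ≤ ∑ x ∈ F, A * B ^ (2 * α / (d + α)) * f x ^ (2 * d / (d + α)) := by
          refine Finset.sum_le_sum fun x _ => ?_
          rw [← Finset.sum_mul, mul_comm]
          exact h f B x _ hB hf fun y hy => (Finset.mem_filter.1 hy).2
      _ ≤ A * B ^ (2 * α / (d + α)) * B ^ (2 * d / (d + α)) := by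
          rw [← Finset.mul_sum]
          exact mul_le_mul_of_nonneg_left (hf.2 F) (by positivity)
      _ = A * B ^ 2 := by
          rw [mul_assoc, ← Real.rpow_add_of_nonneg hB (by positivity) (by positivity),
            ← Real.rpow_two]
          congr 2; field_simp; ring
  have hother : ∑ x ∈ F, ∑ y ∈ F with ¬ f y ≤ f x, regDist S x y ^ (α - d) * f y * f x ≤
      ∑ x ∈ F, ∑ y ∈ F with f y ≤ f x, regDist S x y ^ (α - d) * f y * f x := by
    simp only [Finset.sum_filter]
    rw [Finset.sum_comm]
    refine Finset.sum_le_sum fun x _ => Finset.sum_le_sum fun y _ => ?_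
    rw [regDist_comm hS y x, mul_right_comm]
    by_cases hyx : f y ≤ f x
    · rw [if_pos hyx]; split_ifs
      exacts [hterm x y, le_rfl]
    · rw [if_neg hyx, if_neg (not_not.2 (not_le.1 hyx).le)]
  calc ∑ x ∈ F, ∑ y ∈ F, regDist S x y ^ (α - d) * f y * f x
      = ∑ x ∈ F, ∑ y ∈ F with f y ≤ f x, regDist S x y ^ (α - d) * f y * f x +
        ∑ x ∈ F, ∑ y ∈ F with ¬ f y ≤ f x, regDist S x y ^ (α - d) * f y * f x := by
        rw [← Finset.sum_add_distrib]
        exact Finset.sum_congr rfl fun x _ =>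
          (Finset.sum_filter_add_sum_filter_not F (fun y => f y ≤ f x) _).symm
    _ ≤ 2 * A * B ^ 2 := by linarith

end HardyLittlewoodSobolev

section RieszKernel

variable [Group G] {S : Finset G} {d α c C B : ℝ} {R : G → G → ℝ} {f : G → ℝ}

/-- The upper bound `0 ≤ R x y ≤ c · d(x, y) ^ (α - d)` for a Riesz-type kernel of order `α`, with
`d(x, y)` replaced by `regDist` so that the diagonal is covered. -/
structure IsRieszKernel (S : Finset G) (d α c : ℝ) (R : G → G → ℝ) : Prop where
  nonneg : ∀ x y, 0 ≤ R x y
  le_rpow : ∀ x y, R x y ≤ c * regDist S x y ^ (α - d)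

lemma IsSymmGenerating.isRieszKernel (hS : IsSymmGenerating S) (hR : ∀ x y, 0 ≤ R x y)
    (hup : ∀ x y, x ≠ y → R x y ≤ c * (wordDist S x y : ℝ) ^ (α - d)) (hdiag : ∀ x, R x x ≤ c) :
    IsRieszKernel S d α c R := by
  refine ⟨hR, fun x y => ?_⟩
  by_cases h : wordDist S x y = 0
  · rw [regDist, h, Nat.cast_zero, max_eq_left zero_le_one, Real.one_rpow, mul_one]
    rw [wordDist_eq_wordDist_one] at h
    exact inv_mul_eq_one.1 (hS.eq_one_of_wordDist_eq_zero h) ▸ hdiag x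
  · rw [regDist, max_eq_right (Nat.one_le_cast.2 (Nat.one_le_iff_ne_zero.2 h))]
    refine hup x y ?_
    rintro rfl
    exact h (Nat.sInf_eq_zero.2 (Or.inl ⟨[], by simp⟩))

namespace IsRieszKernel

lemma swap (hR : IsRieszKernel S d α c R) (hS : IsSymmGenerating S) :
    IsRieszKernel S d α c fun x y => R y x :=
  ⟨fun x y => hR.nonneg y x, fun x y => regDist_comm hS x y ▸ hR.le_rpow y x⟩

lemma const_nonneg (hR : IsRieszKernel S d α c R) : 0 ≤ c :=
  nonneg_of_mul_nonneg_left ((hR.nonneg 1 1).trans (hR.le_rpow 1 1))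
    (Real.rpow_pos_of_pos (regDist_pos S 1 1) _)

lemma conv_nonneg (hR : IsRieszKernel S d α c R) (hf : ∀ x, 0 ≤ f x) (x : G) : 0 ≤ conv R f x :=
  tsum_nonneg fun y => mul_nonneg (hR.nonneg x y) (hf y)

lemma energy_nonneg (hR : IsRieszKernel S d α c R) (p : ℝ) (w : G → ℝ) : 0 ≤ energy R p w :=
  tsum_nonneg fun x => mul_nonneg (hR.conv_nonneg (fun _ => Real.rpow_nonneg (abs_nonneg _) _) x)
    (Real.rpow_nonneg (abs_nonneg _) _)

lemma summable_rpow (hR : IsRieszKernel S d α c R) (hP : PackingBound S d C) (hα : 0 < α)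
    (hαd : α < d) (x : G) : Summable fun y => R x y ^ (2 * d / (d - α)) := by
  have hd : 0 < d := hα.trans hαd
  have hs : 0 ≤ 2 * d / (d - α) := div_nonneg (by positivity) (sub_nonneg.2 hαd.le)
  refine Summable.of_nonneg_of_le (fun y => Real.rpow_nonneg (hR.nonneg x y) _)
    (fun y => Real.rpow_le_rpow (hR.nonneg x y) (hR.le_rpow x y) hs) ?_
  simp only [Real.mul_rpow hR.const_nonneg (Real.rpow_nonneg (regDist_pos S x _).le _),
    regDist_rpow_rpow hαd]
  exact (summable_of_sum_le (fun y => Real.rpow_nonneg (regDist_pos S x y).le _)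
    fun F => hP.sum_far_le (neg_neg_of_pos hd) (by linarith) one_pos
      fun y _ => le_max_left _ _).mul_left _

lemma summable_mul (hR : IsRieszKernel S d α c R) (hP : PackingBound S d C) (hα : 0 < α)
    (hαd : α < d) (hf : f ∈ lpBall G (2 * d / (d + α)) B) (x : G) : Summable fun y => R x y * f y :=
  summable_mul_of_mem_lpBall (holderConjugate_two_mul_div (hα.trans hαd) hα hαd)
    (hR.nonneg x) (hR.summable_rpow hP hα hαd x) hf

lemma tendsto_conv (hR : IsRieszKernel S d α c R) (hP : PackingBound S d C) (hα : 0 < α)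
    (hαd : α < d) {f : ℕ → G → ℝ} {g : G → ℝ} (hf : ∀ n, f n ∈ lpBall G (2 * d / (d + α)) B)
    (hlim : ∀ y, Tendsto (fun n => f n y) atTop (𝓝 (g y))) (x : G) :
    Tendsto (fun n => conv R (f n) x) atTop (𝓝 (conv R g x)) :=
  tendsto_tsum_mul_of_mem_lpBall (holderConjugate_two_mul_div (hα.trans hαd) hα hαd)
    (hR.nonneg x) (hR.summable_rpow hP hα hαd x) hf hlim

lemma exists_conv_mul_mem_lpBall (hR : IsRieszKernel S d α c R) (hP : PackingBound S d C)
    (hS : IsSymmGenerating S) (hα : 0 < α) (hαd : α < d) :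
    ∃ A, ∀ (f : G → ℝ) (B : ℝ), 0 ≤ B → f ∈ lpBall G (2 * d / (d + α)) B →
      (fun x => conv R f x * f x) ∈ lpBall G 1 (A * B ^ 2) := by
  obtain ⟨A, -, hA⟩ := hP.exists_sum_sum_le hS hα hαd
  have hc := hR.const_nonneg
  refine ⟨c * A, fun f B hB hf => ⟨fun x => mul_nonneg (hR.conv_nonneg hf.1 x) (hf.1 x),
    fun F => ?_⟩⟩
  simp only [Real.rpow_one]
  have hlim : Tendsto (fun F' : Finset G => ∑ x ∈ F, (∑ y ∈ F', R x y * f y) * f x) atTop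
      (𝓝 (∑ x ∈ F, conv R f x * f x)) :=
    tendsto_finsetSum F fun x _ => (hR.summable_mul hP hα hαd hf x).hasSum.mul_const _
  refine le_of_tendsto hlim ((eventually_ge_atTop F).mono fun F' hFF' => ?_)
  calc ∑ x ∈ F, (∑ y ∈ F', R x y * f y) * f x
      ≤ ∑ x ∈ F', (∑ y ∈ F', R x y * f y) * f x :=
        Finset.sum_le_sum_of_subset_of_nonneg hFF' fun x _ _ =>
          mul_nonneg (Finset.sum_nonneg fun y _ => mul_nonneg (hR.nonneg x y) (hf.1 y)) (hf.1 x)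
    _ ≤ ∑ x ∈ F', c * ∑ y ∈ F', regDist S x y ^ (α - d) * f y * f x := by
        refine Finset.sum_le_sum fun x _ => ?_
        rw [Finset.sum_mul, Finset.mul_sum]
        refine Finset.sum_le_sum fun y _ => ?_
        rw [← mul_assoc, ← mul_assoc]
        exact mul_le_mul_of_nonneg_right
          (mul_le_mul_of_nonneg_right (hR.le_rpow x y) (hf.1 y)) (hf.1 x)
    _ ≤ c * A * B ^ 2 := by
        rw [← Finset.mul_sum, mul_assoc]
        exact mul_le_mul_of_nonneg_left (hA f B F' hB hf) hc

end IsRieszKernel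

end RieszKernel

/-! ### The Sobolev-type inequality for the nonlocal energy -/

section EnergyInequality

variable [Group G] {S : Finset G} {N : ℕ} {α p A C : ℝ} {R : G → G → ℝ} {w : G → ℝ}

/-- The Sobolev inequality `‖w‖_{2N/(N-2)} ≤ C ‖w‖_{D^{1,2}}`. -/
def SobolevIneq (S : Finset G) (N : ℕ) (C : ℝ) : Prop :=
  ∀ w, MemD12 S N w → lpNorm (2 * (N : ℝ) / ((N : ℝ) - 2)) w ≤ C * D12Norm S w

lemma sub_two_pos (hN : 3 ≤ N) : 0 < (N : ℝ) - 2 := by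
  have : (3 : ℝ) ≤ N := by exact_mod_cast hN
  linarith

lemma IsSymmGenerating.exists_sobolevIneq (hS : IsSymmGenerating S) (hN : 3 ≤ N) {C₁ : ℝ}
    (hC₁ : 0 < C₁)
    (hlow : ∀ n : ℕ, 1 ≤ n → C₁ * (n : ℝ) ^ N ≤ Nat.card {x : G // wordDist S 1 x ≤ n}) :
    ∃ C, 0 ≤ C ∧ SobolevIneq S N C := by
  classical
  have := hS.countable
  have h2 := sub_two_pos hN
  have h1 : 0 < (N : ℝ) - 1 := by linarith
  obtain ⟨C, hC, hiso⟩ := exists_isoperimetricIneq hS (by omega) hC₁ hlow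
  exact ⟨C * S.card * (2 * (N - 1) / (N - 2)), by positivity,
    fun w hw => hiso.lpNorm_le hC (sub_pos.1 h2) hw.1 hw.2⟩

lemma sobolevExponent_pos (hN : 3 ≤ N) : 0 < 2 * (N : ℝ) / ((N : ℝ) - 2) := by
  have := sub_two_pos hN
  positivity

lemma SobolevIneq.abs_mem_lpBall (hSob : SobolevIneq S N C) (hC : 0 ≤ C) (hN : 3 ≤ N)
    (hw : MemD12 S N w) {M : ℝ} (hM : D12Norm S w ≤ M) :
    (fun x => |w x|) ∈ lpBall G (2 * N / (N - 2)) (C * M) :=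
  Choquard.abs_mem_lpBall (sobolevExponent_pos hN) hw.1 ((hSob w hw).trans (by gcongr))

lemma SobolevIneq.rpow_abs_mem_lpBall (hSob : SobolevIneq S N C) (hC : 0 ≤ C) (hN : 3 ≤ N)
    (hα : 0 < α) (hp : ((N : ℝ) + α) / ((N : ℝ) - 2) ≤ p) (hw : MemD12 S N w) {M : ℝ}
    (hM : D12Norm S w ≤ M) :
    (fun x => |w x| ^ p) ∈ lpBall G (2 * N / (N + α)) ((C * M) ^ p) := by
  have hN2 := sub_two_pos hN
  have hCM : 0 ≤ C * M := mul_nonneg hC ((D12Norm_nonneg S w).trans hM)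
  have hexp : 2 * (N : ℝ) / (N - 2) ≤ p * (2 * N / (N + α)) := by
    calc 2 * (N : ℝ) / (N - 2) = (N + α) / (N - 2) * (2 * N / (N + α)) := by field_simp
      _ ≤ _ := by gcongr
  exact rpow_mem_lpBall hCM (lpBall_subset_of_exponent_le (sobolevExponent_pos hN) hexp hCM
    (hSob.abs_mem_lpBall hC hN hw hM))

lemma gradSq_const_mul (S : Finset G) (a : ℝ) (w : G → ℝ) (x : G) :
    gradSq S (fun y => a * w y) x = a ^ 2 * gradSq S w x := by
  simp only [gradSq, ← mul_sub, mul_pow, Finset.mul_sum]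

lemma MemD12.const_mul (hw : MemD12 S N w) (a : ℝ) : MemD12 S N fun y => a * w y := by
  refine ⟨?_, ?_⟩
  · simp only [Memlp, abs_mul, Real.mul_rpow (abs_nonneg _) (abs_nonneg _)]
    exact hw.1.mul_left _
  · exact (hw.2.mul_left (a ^ 2)).congr fun x => (gradSq_const_mul S a w x).symm

lemma dirichlet_const_mul (S : Finset G) (a : ℝ) (w : G → ℝ) :
    dirichlet S (fun y => a * w y) = a ^ 2 * dirichlet S w := by
  simp only [dirichlet, gradSq_const_mul, tsum_mul_left]

lemma energy_const_mul {G : Type*} (R : G → G → ℝ) (p a : ℝ) (w : G → ℝ) :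
    energy R p (fun y => a * w y) = (|a| ^ p) ^ 2 * energy R p w := by
  simp only [energy, conv, abs_mul, Real.mul_rpow (abs_nonneg _) (abs_nonneg _),
    mul_left_comm (R _ _), tsum_mul_left]
  rw [← tsum_mul_left]
  exact tsum_congr fun x => by ring

lemma rpow_D12Norm_sq (S : Finset G) (p : ℝ) (w : G → ℝ) :
    (D12Norm S w ^ p) ^ 2 = dirichlet S w ^ p := by
  rw [Real.rpow_pow_comm (D12Norm_nonneg S w), D12Norm_sq]

lemma SobolevIneq.exists_energy_le (hSob : SobolevIneq S N C) (hC : 0 ≤ C) (hN : 3 ≤ N)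
    {C₂ c : ℝ} (hS : IsSymmGenerating S) (hP : PackingBound S N C₂) (hR : IsRieszKernel S N α c R)
    (hα : 0 < α) (hαN : α < N) (hp : ((N : ℝ) + α) / ((N : ℝ) - 2) ≤ p) :
    ∃ A, ∀ w, MemD12 S N w → energy R p w ≤ A * dirichlet S w ^ p := by
  obtain ⟨A, hA⟩ := hR.exists_conv_mul_mem_lpBall hP hS hα hαN
  refine ⟨A * (C ^ p) ^ 2, fun w hw => ?_⟩
  have hD := D12Norm_nonneg S w
  have h := tsum_rpow_le_of_mem_lpBall
    (hA _ _ (by positivity) (hSob.rpow_abs_mem_lpBall hC hN hα hp hw le_rfl))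
  simp only [Real.rpow_one] at h
  refine h.trans_eq ?_
  rw [Real.mul_rpow hC hD, mul_pow, rpow_D12Norm_sq, mul_assoc]

lemma energy_le_bestK_mul (hp : 0 < p)
    (hA : ∀ w, MemD12 S N w → energy R p w ≤ A * dirichlet S w ^ p) (hw : MemD12 S N w) :
    energy R p w ≤ bestK S N R p * dirichlet S w ^ p := by
  rcases (D12Norm_nonneg S w).eq_or_lt with h0 | h0
  · have hD : dirichlet S w ^ p = 0 := by
      rw [← rpow_D12Norm_sq, ← h0, Real.zero_rpow hp.ne', zero_pow two_ne_zero]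
    simpa only [hD, mul_zero] using hA w hw
  set a := (D12Norm S w)⁻¹
  have hnorm : D12Norm S (fun y => a * w y) = 1 := by
    rw [← sq_eq_sq₀ (D12Norm_nonneg S _) zero_le_one, D12Norm_sq, dirichlet_const_mul, ← D12Norm_sq,
      ← mul_pow, inv_mul_cancel₀ h0.ne']
  have hbdd : BddAbove {t : ℝ | ∃ u, MemD12 S N u ∧ D12Norm S u = 1 ∧ t = energy R p u} := by
    refine ⟨A, ?_⟩
    rintro t ⟨u, hu, hu1, rfl⟩
    simpa only [← rpow_D12Norm_sq, hu1, Real.one_rpow, one_pow, mul_one] using hA u hu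
  have hle : energy R p (fun y => a * w y) ≤ bestK S N R p :=
    le_csSup hbdd ⟨_, hw.const_mul a, hnorm, rfl⟩
  rw [energy_const_mul, abs_of_pos (inv_pos.2 h0), Real.inv_rpow h0.le, inv_pow, rpow_D12Norm_sq,
    inv_mul_le_iff₀ (by rw [← rpow_D12Norm_sq]; positivity), mul_comm] at hle
  exact hle

end EnergyInequality

/-! ### Finitely supported perturbations -/

section Perturbation

lemma tsum_sub_tsum_eq_sum {ι : Type*} {f h : ι → ℝ} (hf : Summable f) (hh : Summable h)
    {T : Finset ι} (hT : ∀ x ∉ T, f x = h x) : ∑' x, f x - ∑' x, h x = ∑ x ∈ T, (f x - h x) := by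
  rw [← hf.tsum_sub hh]
  exact tsum_eq_sum fun x hx => sub_eq_zero.2 (hT x hx)

variable [Group G] {S : Finset G} {N : ℕ} {d α c C B : ℝ} {R : G → G → ℝ} {φ v : G → ℝ}
  {u : ℕ → G → ℝ}

lemma exists_forall_gradSq_sub_eq (S : Finset G) (hφ : φ.support.Finite) :
    ∃ T : Finset G, ∀ u : G → ℝ, ∀ x ∉ T, gradSq S u x = gradSq S (u - φ) x := by
  classical
  refine ⟨hφ.toFinset ∪ S.biUnion fun s => hφ.toFinset.image (· * s⁻¹), fun u x hx => ?_⟩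
  simp only [Finset.mem_union, Finset.mem_biUnion, Finset.mem_image, Set.Finite.mem_toFinset,
    not_or, not_exists, not_and, Function.notMem_support] at hx
  obtain ⟨hx, hxs⟩ := hx
  refine Finset.sum_congr rfl fun s hs => ?_
  have hs0 : φ (x * s) = 0 := by
    by_contra h
    exact hxs s hs _ h (mul_inv_cancel_right x s)
  rw [Pi.sub_apply, Pi.sub_apply, hx, hs0, sub_zero, sub_zero]

lemma MemD12.sub_finite (hv : MemD12 S N v) (hφ : φ.support.Finite) : MemD12 S N (v - φ) := by
  obtain ⟨T, hT⟩ := exists_forall_gradSq_sub_eq S hφ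
  refine ⟨(summable_congr_cofinite ?_).1 hv.1, (summable_congr_cofinite ?_).1 hv.2⟩
  · filter_upwards [hφ.compl_mem_cofinite] with x hx
    rw [Pi.sub_apply, Function.notMem_support.1 hx, sub_zero]
  · filter_upwards [T.finite_toSet.compl_mem_cofinite] with x hx using hT v x hx

lemma tendsto_gradSq (hlim : ∀ x, Tendsto (fun n => u n x) atTop (𝓝 (v x))) (x : G) :
    Tendsto (fun n => gradSq S (u n) x) atTop (𝓝 (gradSq S v x)) :=
  tendsto_finsetSum S fun s _ => ((hlim (x * s)).sub (hlim x)).pow 2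

lemma tendsto_dirichlet_sub (hu : ∀ n, MemD12 S N (u n)) (hv : MemD12 S N v)
    (hlim : ∀ x, Tendsto (fun n => u n x) atTop (𝓝 (v x))) (hφ : φ.support.Finite) {a : ℝ}
    (ha : Tendsto (fun n => dirichlet S (u n)) atTop (𝓝 a)) :
    Tendsto (fun n => dirichlet S (u n - φ)) atTop
      (𝓝 (a - dirichlet S v + dirichlet S (v - φ))) := by
  obtain ⟨T, hT⟩ := exists_forall_gradSq_sub_eq S hφ
  have hdiff {w : G → ℝ} (hw : MemD12 S N w) : dirichlet S w - dirichlet S (w - φ) =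
      ∑ x ∈ T, (gradSq S w x - gradSq S (w - φ) x) :=
    tsum_sub_tsum_eq_sum hw.2 (hw.sub_finite hφ).2 (hT w)
  have hT_lim : Tendsto (fun n => dirichlet S (u n) - dirichlet S (u n - φ)) atTop
      (𝓝 (dirichlet S v - dirichlet S (v - φ))) := by
    simp only [hdiff hv, fun n => hdiff (hu n)]
    exact tendsto_finsetSum T fun x _ => (tendsto_gradSq hlim x).sub
      (tendsto_gradSq (fun y => (hlim y).sub_const (φ y)) x)
  simpa only [sub_sub_cancel, ← sub_add] using ha.sub hT_lim

lemma IsRieszKernel.tsum_conv_mul_sub_eq_sum (hR : IsRieszKernel S d α c R)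
    (hP : PackingBound S d C) (hS : IsSymmGenerating S) (hα : 0 < α) (hαd : α < d) (hB : 0 ≤ B)
    {f h : G → ℝ} (hf : f ∈ lpBall G (2 * d / (d + α)) B) (hh : h ∈ lpBall G (2 * d / (d + α)) B)
    {Q : Finset G} (hQ : ∀ x ∉ Q, f x = h x) :
    ∑' x, conv R f x * f x - ∑' x, conv R h x * h x =
      ∑ x ∈ Q, (conv R f x + conv (fun x y => R y x) h x) * (f x - h x) := by
  obtain ⟨A, hA⟩ := hR.exists_conv_mul_mem_lpBall hP hS hα hαd
  have hsum {g : G → ℝ} (hg : g ∈ lpBall G (2 * d / (d + α)) B) :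
      Summable fun x => conv R g x * g x := by
    simpa only [Real.rpow_one] using summable_rpow_of_mem_lpBall (hA g B hB hg)
  have hconv (x : G) : conv R f x - conv R h x = ∑ y ∈ Q, R x y * (f y - h y) := by
    simp only [mul_sub]
    exact tsum_sub_tsum_eq_sum (hR.summable_mul hP hα hαd hf x) (hR.summable_mul hP hα hαd hh x)
      fun y hy => by rw [hQ y hy]
  have hleft : HasSum (fun x => conv R f x * (f x - h x)) (∑ x ∈ Q, conv R f x * (f x - h x)) :=
    hasSum_sum_of_ne_finset_zero fun x hx => by rw [hQ x hx, sub_self, mul_zero]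
  have hright : HasSum (fun x => ∑ y ∈ Q, R x y * h x * (f y - h y))
      (∑ y ∈ Q, conv (fun x y => R y x) h y * (f y - h y)) :=
    hasSum_sum fun y _ => ((hR.swap hS).summable_mul hP hα hαd hh y).hasSum.mul_right _
  rw [← (hsum hf).tsum_sub (hsum hh)]
  simp only [add_mul, Finset.sum_add_distrib]
  refine ((hleft.add hright).congr_fun fun x => ?_).tsum_eq
  have h1 : ∑ y ∈ Q, R x y * h x * (f y - h y) = (conv R f x - conv R h x) * h x := by
    rw [hconv, Finset.sum_mul]
    exact Finset.sum_congr rfl fun y _ => mul_right_comm _ _ _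
  rw [h1]
  ring

lemma IsRieszKernel.tendsto_tsum_conv_mul_sub (hR : IsRieszKernel S d α c R)
    (hP : PackingBound S d C) (hS : IsSymmGenerating S) (hα : 0 < α) (hαd : α < d) (hB : 0 ≤ B)
    {f h : ℕ → G → ℝ} {f' h' : G → ℝ} (hf : ∀ n, f n ∈ lpBall G (2 * d / (d + α)) B)
    (hh : ∀ n, h n ∈ lpBall G (2 * d / (d + α)) B)
    (hf_lim : ∀ x, Tendsto (fun n => f n x) atTop (𝓝 (f' x)))
    (hh_lim : ∀ x, Tendsto (fun n => h n x) atTop (𝓝 (h' x)))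
    {Q : Finset G} (hQ : ∀ n, ∀ x ∉ Q, f n x = h n x) :
    Tendsto (fun n => ∑' x, conv R (f n) x * f n x - ∑' x, conv R (h n) x * h n x) atTop
      (𝓝 (∑' x, conv R f' x * f' x - ∑' x, conv R h' x * h' x)) := by
  have hd : 0 < d := hα.trans hαd
  have hr : 0 ≤ 2 * d / (d + α) := by positivity
  have hQ' (x : G) (hx : x ∉ Q) : f' x = h' x :=
    tendsto_nhds_unique ((hf_lim x).congr fun n => hQ n x hx) (hh_lim x)
  rw [hR.tsum_conv_mul_sub_eq_sum hP hS hα hαd hB (mem_lpBall_of_tendsto hr hf hf_lim)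
    (mem_lpBall_of_tendsto hr hh hh_lim) hQ']
  simp only [fun n => hR.tsum_conv_mul_sub_eq_sum hP hS hα hαd hB (hf n) (hh n) (hQ n)]
  exact tendsto_finsetSum Q fun x _ => ((hR.tendsto_conv hP hα hαd hf hf_lim x).add
    ((hR.swap hS).tendsto_conv hP hα hαd hh hh_lim x)).mul ((hf_lim x).sub (hh_lim x))

end Perturbation

section Truncation

/-- Truncation of a real number to `[-ε, ε]`. -/
def clamp (ε t : ℝ) : ℝ := max (-ε) (min ε t)

lemma clamp_of_abs_le {ε t : ℝ} (h : |t| ≤ ε) : clamp ε t = t := by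
  rw [clamp, min_eq_right (abs_le.1 h).2, max_eq_right (abs_le.1 h).1]

lemma abs_clamp_sub_clamp_le (ε a b : ℝ) : |clamp ε a - clamp ε b| ≤ |a - b| := by
  simpa only [NNReal.coe_one, one_mul, Real.dist_eq, id, clamp] using
    ((LipschitzWith.id.const_min ε).const_max (-ε)).dist_le_mul a b

lemma tendsto_clamp (t : ℝ) : Tendsto (fun ε => clamp ε t) (𝓝[>] 0) (𝓝 0) := by
  have hcont : Continuous fun ε => clamp ε t := by unfold clamp; fun_prop
  simpa [clamp] using (hcont.tendsto 0).mono_left nhdsWithin_le_nhds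

lemma Memlp.finite_support_sub_clamp {ι : Type*} {v : ι → ℝ} {q ε : ℝ} (hq : 0 < q)
    (hv : Memlp q v) (hε : 0 < ε) : (v - clamp ε ∘ v).support.Finite := by
  refine (hv.finite_setOf_lt_rpow hq one_pos hε).subset fun x hx => ?_
  by_contra h
  exact hx (sub_eq_zero.2 (clamp_of_abs_le (Real.rpow_one |v x| ▸ not_lt.1 h)).symm)

lemma tendsto_dirichlet_clamp [Group G] {S : Finset G} {v : G → ℝ} (hv : Summable (gradSq S v)) :
    Tendsto (fun ε => dirichlet S (clamp ε ∘ v)) (𝓝[>] 0) (𝓝 0) := by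
  rw [← tsum_zero (α := ℝ) (β := G)]
  refine tendsto_tsum_of_dominated_convergence hv (fun x => ?_) (.of_forall fun ε x => ?_)
  · simpa [gradSq] using tendsto_finsetSum S fun s _ =>
      ((tendsto_clamp (v (x * s))).sub (tendsto_clamp (v x))).pow 2
  · rw [Real.norm_of_nonneg (gradSq_nonneg S _ x)]
    exact Finset.sum_le_sum fun s _ => sq_le_sq.2 (abs_clamp_sub_clamp_le ε _ _)

end Truncation

/-! ### Compactness -/

section Compactness

lemma exists_strictMono_forall_tendsto {ι : Type*} [Countable ι] {w : ℕ → ι → ℝ}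
    (hw : ∀ x, ∃ b, ∀ n, |w n x| ≤ b) :
    ∃ φ : ℕ → ℕ, StrictMono φ ∧ ∃ v : ι → ℝ, ∀ x, Tendsto (fun n => w (φ n) x) atTop (𝓝 (v x)) := by
  choose b hb using hw
  have hK : IsCompact (Set.univ.pi fun x => Set.Icc (-b x) (b x)) :=
    isCompact_univ_pi fun _ => isCompact_Icc
  obtain ⟨v, -, φ, hφ, hlim⟩ := hK.tendsto_subseq (x := w) fun n x _ => abs_le.1 (hb x n)
  exact ⟨φ, hφ, v, tendsto_pi_nhds.1 hlim⟩

variable [Group G] {S : Finset G}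

lemma IsSymmGenerating.tsum_setOf_lt_wordDist (hS : IsSymmGenerating S) {k : G → ℝ}
    (hk : Summable k) (r : ℕ) :
    ∑' x : {z : G // r < wordDist S 1 z}, k x = ∑' x, k x - ∑ x ∈ hS.ball r, k x := by
  have hcompl (z : G) : r < wordDist S 1 z ↔ z ∉ hS.ball r := by rw [hS.mem_ball, not_le]
  rw [← hk.sum_add_tsum_subtype_compl (hS.ball r), add_sub_cancel_left]
  exact (Equiv.subtypeEquivRight hcompl).tsum_eq fun x : {z : G // z ∉ hS.ball r} => k x

lemma IsSymmGenerating.exists_tendsto_tail (hS : IsSymmGenerating S) {k : ℕ → G → ℝ} {k' : G → ℝ}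
    {A : ℝ} (hk : ∀ n, Summable (k n)) (hk' : Summable k')
    (hlim : ∀ x, Tendsto (fun n => k n x) atTop (𝓝 (k' x)))
    (hA : Tendsto (fun n => ∑' x, k n x) atTop (𝓝 A)) :
    ∃ L : ℕ → ℝ,
      (∀ r, Tendsto (fun n => ∑' x : {z : G // r < wordDist S 1 z}, k n x) atTop (𝓝 (L r))) ∧
      Tendsto L atTop (𝓝 (A - ∑' x, k' x)) := by
  refine ⟨fun r => A - ∑ x ∈ hS.ball r, k' x, fun r => ?_,
    (hk'.hasSum.comp hS.tendsto_ball).const_sub A⟩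
  simp only [fun n => hS.tsum_setOf_lt_wordDist (hk n) r]
  exact hA.sub (tendsto_finsetSum _ fun x _ => hlim x)

end Compactness

/-! ### Concentration at infinity -/

section Concentration

lemma tendsto_rpow_abs {p : ℝ} (hp : 0 < p) {u : ℕ → G → ℝ} {v : G → ℝ}
    (hlim : ∀ x, Tendsto (fun n => u n x) atTop (𝓝 (v x))) (x : G) :
    Tendsto (fun n => |u n x| ^ p) atTop (𝓝 (|v x| ^ p)) :=
  (hlim x).abs.rpow_const (Or.inr hp.le)

variable [Group G] {S : Finset G} {N : ℕ} {α p a E M C C₂ c : ℝ} {R : G → G → ℝ} {φ v : G → ℝ}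
  {u : ℕ → G → ℝ}

lemma exists_D12Norm_le_of_tendsto_dirichlet
    (ha : Tendsto (fun n => dirichlet S (u n)) atTop (𝓝 a)) : ∃ M, ∀ n, D12Norm S (u n) ≤ M := by
  obtain ⟨b, hb⟩ := ha.bddAbove_range
  exact ⟨√b, fun n => Real.le_sqrt_of_sq_le (D12Norm_sq S (u n) ▸ hb ⟨n, rfl⟩)⟩

lemma dirichlet_le_sq {w : G → ℝ} (hM : D12Norm S w ≤ M) : dirichlet S w ≤ M ^ 2 := by
  rw [← D12Norm_sq]
  exact pow_le_pow_left₀ (D12Norm_nonneg S w) hM 2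

lemma pos_of_add_div_sub_two_le (hN : 3 ≤ N) (hα : 0 < α)
    (hp : ((N : ℝ) + α) / ((N : ℝ) - 2) ≤ p) : 0 < p := by
  have := sub_two_pos hN
  exact lt_of_lt_of_le (by positivity) hp

lemma SobolevIneq.memD12_of_tendsto (hSob : SobolevIneq S N C) (hC : 0 ≤ C) (hN : 3 ≤ N)
    (hu : ∀ n, MemD12 S N (u n)) (hM : ∀ n, D12Norm S (u n) ≤ M)
    (hlim : ∀ x, Tendsto (fun n => u n x) atTop (𝓝 (v x))) : MemD12 S N v := by
  have hv := mem_lpBall_of_tendsto (sobolevExponent_pos hN).le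
    (fun n => hSob.abs_mem_lpBall hC hN (hu n) (hM n)) fun x => (hlim x).abs
  have hgrad := mem_lpBall_of_tendsto zero_le_one
    (fun n => mem_lpBall_one (hu n).2 (gradSq_nonneg S (u n)) (dirichlet_le_sq (hM n)))
    (tendsto_gradSq hlim)
  exact ⟨summable_rpow_of_mem_lpBall hv,
    by simpa only [Real.rpow_one] using summable_rpow_of_mem_lpBall hgrad⟩

lemma SobolevIneq.tendsto_conv_mul (hSob : SobolevIneq S N C) (hC : 0 ≤ C) (hN : 3 ≤ N)
    (hP : PackingBound S N C₂) (hR : IsRieszKernel S N α c R) (hα : 0 < α) (hαN : α < N)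
    (hp : ((N : ℝ) + α) / ((N : ℝ) - 2) ≤ p) (hu : ∀ n, MemD12 S N (u n))
    (hM : ∀ n, D12Norm S (u n) ≤ M) (hlim : ∀ x, Tendsto (fun n => u n x) atTop (𝓝 (v x))) (x : G) :
    Tendsto (fun n => conv R (fun y => |u n y| ^ p) x * |u n x| ^ p) atTop
      (𝓝 (conv R (fun y => |v y| ^ p) x * |v x| ^ p)) := by
  have hrpow := tendsto_rpow_abs (pos_of_add_div_sub_two_le hN hα hp) hlim
  exact (hR.tendsto_conv hP hα hαN
    (fun n => hSob.rpow_abs_mem_lpBall hC hN hα hp (hu n) (hM n)) hrpow x).mul (hrpow x)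

lemma SobolevIneq.summable_conv_mul (hSob : SobolevIneq S N C) (hC : 0 ≤ C) (hN : 3 ≤ N)
    (hS : IsSymmGenerating S) (hP : PackingBound S N C₂) (hR : IsRieszKernel S N α c R)
    (hα : 0 < α) (hαN : α < N) (hp : ((N : ℝ) + α) / ((N : ℝ) - 2) ≤ p)
    (hv : MemD12 S N v) :
    Summable fun x => conv R (fun y => |v y| ^ p) x * |v x| ^ p := by
  obtain ⟨A, hA⟩ := hR.exists_conv_mul_mem_lpBall hP hS hα hαN
  simpa only [Real.rpow_one] using summable_rpow_of_mem_lpBall (hA _ _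
    (Real.rpow_nonneg (mul_nonneg hC (D12Norm_nonneg S v)) p)
    (hSob.rpow_abs_mem_lpBall hC hN hα hp hv le_rfl))

lemma SobolevIneq.exists_strictMono_tendsto (hSob : SobolevIneq S N C) (hC : 0 ≤ C) (hN : 3 ≤ N)
    (hS : IsSymmGenerating S) (hP : PackingBound S N C₂) (hR : IsRieszKernel S N α c R)
    (hα : 0 < α) (hαN : α < N) (hp : ((N : ℝ) + α) / ((N : ℝ) - 2) ≤ p)
    (hu : ∀ n, MemD12 S N (u n))
    (hM : ∀ n, D12Norm S (u n) ≤ M) :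
    ∃ φ : ℕ → ℕ, StrictMono φ ∧ ∃ (v : G → ℝ) (a E : ℝ),
      (∀ x, Tendsto (fun n => u (φ n) x) atTop (𝓝 (v x))) ∧
      Tendsto (fun n => dirichlet S (u (φ n))) atTop (𝓝 a) ∧
      Tendsto (fun n => energy R p (u (φ n))) atTop (𝓝 E) := by
  have := hS.countable
  have hp0 := pos_of_add_div_sub_two_le hN hα hp
  obtain ⟨A, hA⟩ := hSob.exists_energy_le hC hN hS hP hR hα hαN hp
  have hbdd : ∀ i : G ⊕ Bool, ∃ b, ∀ n,
      |Sum.elim (u n) (Bool.rec (dirichlet S (u n)) (energy R p (u n))) i| ≤ b := by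
    rintro (x | _ | _)
    · refine ⟨C * M, fun n => le_of_mem_lpBall (sobolevExponent_pos hN) ?_
        (hSob.abs_mem_lpBall hC hN (hu n) (hM n)) x⟩
      exact mul_nonneg hC ((D12Norm_nonneg S (u 0)).trans (hM 0))
    · exact ⟨M ^ 2, fun n => (abs_of_nonneg (dirichlet_nonneg S (u n))).trans_le
        (dirichlet_le_sq (hM n))⟩
    · refine ⟨|A| * (M ^ 2) ^ p, fun n => (abs_of_nonneg (hR.energy_nonneg p _)).trans_le
        ((hA _ (hu n)).trans ?_)⟩
      exact mul_le_mul (le_abs_self A)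
        (Real.rpow_le_rpow (dirichlet_nonneg S _) (dirichlet_le_sq (hM n)) hp0.le)
        (Real.rpow_nonneg (dirichlet_nonneg S _) p) (abs_nonneg A)
  obtain ⟨φ, hφ, w, hw⟩ := exists_strictMono_forall_tendsto hbdd
  exact ⟨φ, hφ, fun x => w (.inl x), w (.inr false), w (.inr true), fun x => hw (.inl x),
    hw (.inr false), hw (.inr true)⟩

lemma SobolevIneq.tendsto_energy_sub (hSob : SobolevIneq S N C) (hC : 0 ≤ C) (hN : 3 ≤ N)
    (hS : IsSymmGenerating S) (hP : PackingBound S N C₂) (hR : IsRieszKernel S N α c R)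
    (hα : 0 < α) (hαN : α < N) (hp : ((N : ℝ) + α) / ((N : ℝ) - 2) ≤ p)
    (hu : ∀ n, MemD12 S N (u n)) (hv : MemD12 S N v)
    (hlim : ∀ x, Tendsto (fun n => u n x) atTop (𝓝 (v x))) (hφ : φ.support.Finite)
    (ha : Tendsto (fun n => dirichlet S (u n)) atTop (𝓝 a))
    (hE : Tendsto (fun n => energy R p (u n)) atTop (𝓝 E)) :
    Tendsto (fun n => energy R p (u n - φ)) atTop
      (𝓝 (E - energy R p v + energy R p (v - φ))) := by
  have hp0 := pos_of_add_div_sub_two_le hN hα hp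
  obtain ⟨M₁, hM₁⟩ := exists_D12Norm_le_of_tendsto_dirichlet ha
  obtain ⟨M₂, hM₂⟩ :=
    exists_D12Norm_le_of_tendsto_dirichlet (tendsto_dirichlet_sub hu hv hlim hφ ha)
  have hM : 0 ≤ C * max M₁ M₂ :=
    mul_nonneg hC ((D12Norm_nonneg S (u 0)).trans ((hM₁ 0).trans (le_max_left _ _)))
  have hdiff := hR.tendsto_tsum_conv_mul_sub hP hS hα hαN (Real.rpow_nonneg hM p)
    (fun n => hSob.rpow_abs_mem_lpBall hC hN hα hp (hu n) ((hM₁ n).trans (le_max_left _ _)))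
    (fun n => hSob.rpow_abs_mem_lpBall hC hN hα hp ((hu n).sub_finite hφ)
      ((hM₂ n).trans (le_max_right _ _)))
    (tendsto_rpow_abs hp0 hlim) (tendsto_rpow_abs hp0 fun x => (hlim x).sub_const (φ x))
    (Q := hφ.toFinset) fun n x hx => by
      rw [Pi.sub_apply, Function.notMem_support.1 (mt hφ.mem_toFinset.2 hx), sub_zero]
  exact (sub_add E _ _ ▸ hE.sub hdiff).congr fun n => sub_sub_cancel _ _

/-- The Sobolev-type inequality is applied to `u n - φ`, where `φ = v - clamp ε ∘ v` has finite
support and `v - φ = clamp ε ∘ v` has small Dirichlet energy. -/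
lemma SobolevIneq.sub_energy_le (hSob : SobolevIneq S N C) (hC : 0 ≤ C) (hN : 3 ≤ N)
    (hS : IsSymmGenerating S) (hP : PackingBound S N C₂) (hR : IsRieszKernel S N α c R)
    (hα : 0 < α) (hαN : α < N) (hp : ((N : ℝ) + α) / ((N : ℝ) - 2) ≤ p)
    (hu : ∀ n, MemD12 S N (u n)) (hv : MemD12 S N v)
    (hlim : ∀ x, Tendsto (fun n => u n x) atTop (𝓝 (v x)))
    (ha : Tendsto (fun n => dirichlet S (u n)) atTop (𝓝 a))
    (hE : Tendsto (fun n => energy R p (u n)) atTop (𝓝 E)) :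
    E - energy R p v ≤ bestK S N R p * (a - dirichlet S v) ^ p := by
  have hp0 := pos_of_add_div_sub_two_le hN hα hp
  obtain ⟨A, hA⟩ := hSob.exists_energy_le hC hN hS hP hR hα hαN hp
  have hle (ε : ℝ) (hε : 0 < ε) : E - energy R p v ≤
      bestK S N R p * (a - dirichlet S v + dirichlet S (clamp ε ∘ v)) ^ p := by
    have hφ := hv.1.finite_support_sub_clamp (sobolevExponent_pos hN) hε
    have hD_lim := tendsto_dirichlet_sub hu hv hlim hφ ha
    have hE_lim := hSob.tendsto_energy_sub hC hN hS hP hR hα hαN hp hu hv hlim hφ ha hE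
    rw [sub_sub_cancel] at hD_lim hE_lim
    exact (le_add_of_nonneg_right (hR.energy_nonneg p _)).trans (le_of_tendsto_of_tendsto' hE_lim
      ((hD_lim.rpow_const (Or.inr hp0.le)).const_mul _)
      fun n => energy_le_bestK_mul hp0 hA ((hu n).sub_finite hφ))
  have hclamp := (((tendsto_dirichlet_clamp hv.2).const_add (a - dirichlet S v)).rpow_const
    (Or.inr hp0.le)).const_mul (bestK S N R p)
  rw [add_zero] at hclamp
  exact ge_of_tendsto hclamp (eventually_mem_nhdsWithin.mono hle)

end Concentration

theorem concentration_compactness_mass_at_infinity_general [Group G]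
    (S : Finset G) (hS_gen : Subgroup.closure (S : Set G) = ⊤) (hS_sym : ∀ s ∈ S, s⁻¹ ∈ S)
    (N : ℕ) (hN : 3 ≤ N) (C₁ C₂ : ℝ) (hC₁ : 0 < C₁)
    (hgrowth : ∀ n : ℕ, 1 ≤ n →
      C₁ * (n : ℝ) ^ N ≤ (Nat.card {x : G // wordDist S 1 x ≤ n} : ℝ) ∧
      (Nat.card {x : G // wordDist S 1 x ≤ n} : ℝ) ≤ C₂ * (n : ℝ) ^ N)
    (α : ℝ) (hα : 0 < α) (hαN : α < N)
    (Rα : G → G → ℝ) (hR_nonneg : ∀ x y, 0 ≤ Rα x y) (c₂ : ℝ)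
    (hR_up : ∀ x y : G, x ≠ y → Rα x y ≤ c₂ * (wordDist S x y : ℝ) ^ (α - (N : ℝ)))
    (hR_diag : ∀ x : G, Rα x x ≤ c₂)
    (p : ℝ) (hp : ((N : ℝ) + α) / ((N : ℝ) - 2) ≤ p)
    (u : ℕ → G → ℝ)
    (hbdd : ∃ M : ℝ, ∀ n, MemD12 S N (u n) ∧ D12Norm S (u n) ≤ M) :
    ∃ φ : ℕ → ℕ, StrictMono φ ∧ ∃ v : G → ℝ, MemD12 S N v ∧
      (∀ x : G, Tendsto (fun n => u (φ n) x) atTop (𝓝 (v x))) ∧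
      ∃ L M : ℕ → ℝ,
        (∀ r : ℕ, 1 ≤ r →
          Tendsto (fun n => ∑' x : {z : G // r < wordDist S 1 z}, gradSq S (u (φ n)) (x : G))
            atTop (𝓝 (L r)) ∧
          Tendsto (fun n => ∑' x : {z : G // r < wordDist S 1 z},
              conv Rα (fun y => |u (φ n) y| ^ p) (x : G) * |u (φ n) (x : G)| ^ p)
            atTop (𝓝 (M r))) ∧
        ∃ μinf νinf : ℝ, Tendsto L atTop (𝓝 μinf) ∧ Tendsto M atTop (𝓝 νinf) ∧
          νinf ≤ bestK S N Rα p * μinf ^ p ∧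
          Tendsto (fun n => D12Norm S (u (φ n)) ^ 2) atTop (𝓝 (D12Norm S v ^ 2 + μinf)) ∧
          Tendsto (fun n => energy Rα p (u (φ n))) atTop (𝓝 (energy Rα p v + νinf)) := by
  have hS : IsSymmGenerating S := ⟨hS_gen, hS_sym⟩
  have hP : PackingBound S N C₂ := hS.packingBound fun n hn => (hgrowth n hn).2
  have hR : IsRieszKernel S N α c₂ Rα := hS.isRieszKernel hR_nonneg hR_up hR_diag
  obtain ⟨C, hC, hSob⟩ := hS.exists_sobolevIneq hN hC₁ fun n hn => (hgrowth n hn).1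
  obtain ⟨B, hB⟩ := hbdd
  obtain ⟨φ, hφ, v, a, E, hlim, ha, hE⟩ := hSob.exists_strictMono_tendsto hC hN hS hP hR hα hαN hp
    (fun n => (hB n).1) fun n => (hB n).2
  have hu (n : ℕ) : MemD12 S N (u (φ n)) := (hB (φ n)).1
  have hv : MemD12 S N v := hSob.memD12_of_tendsto hC hN hu (fun n => (hB (φ n)).2) hlim
  have hsum {w : G → ℝ} (hw : MemD12 S N w) :=
    hSob.summable_conv_mul hC hN hS hP hR hα hαN hp hw
  obtain ⟨L, hL, hL_lim⟩ :=
    hS.exists_tendsto_tail (fun n => (hu n).2) hv.2 (tendsto_gradSq hlim) ha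
  obtain ⟨M, hM, hM_lim⟩ := hS.exists_tendsto_tail (fun n => hsum (hu n)) (hsum hv)
    (hSob.tendsto_conv_mul hC hN hP hR hα hαN hp hu (fun n => (hB (φ n)).2) hlim) hE
  refine ⟨φ, hφ, v, hv, hlim, L, M, fun r _ => ⟨hL r, hM r⟩, _, _, hL_lim, hM_lim,
    hSob.sub_energy_le hC hN hS hP hR hα hαN hp hu hv hlim ha hE, ?_, ?_⟩
  · simpa only [D12Norm_sq, dirichlet, add_sub_cancel] using ha
  · simpa only [energy, add_sub_cancel] using hE

theorem concentration_compactness_mass_at_infinity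
    [Group G] [Countable G]
    (S : Finset G) (hS_gen : Subgroup.closure (S : Set G) = ⊤)
    (hS_sym : ∀ s ∈ S, s⁻¹ ∈ S) (hS_e : (1 : G) ∉ S)
    (N : ℕ) (hN : 3 ≤ N)
    (C₁ C₂ : ℝ) (hC₁ : 0 < C₁) (hC₂ : 0 < C₂)
    (hgrowth : ∀ n : ℕ, 1 ≤ n →
      C₁ * (n : ℝ) ^ N ≤ (Nat.card {x : G // wordDist S 1 x ≤ n} : ℝ) ∧
      (Nat.card {x : G // wordDist S 1 x ≤ n} : ℝ) ≤ C₂ * (n : ℝ) ^ N)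
    (α : ℝ) (hα : 0 < α) (hαN : α < N)
    (Rα : G → G → ℝ) (hR_nonneg : ∀ x y, 0 ≤ Rα x y)
    (hR_symm : ∀ x y, Rα x y = Rα y x)
    (c₁ c₂ : ℝ) (hc₁ : 0 < c₁) (hc₂ : 0 < c₂)
    (hR_low : ∀ x y : G, x ≠ y → c₁ * (wordDist S x y : ℝ) ^ (α - (N : ℝ)) ≤ Rα x y)
    (hR_up : ∀ x y : G, x ≠ y → Rα x y ≤ c₂ * (wordDist S x y : ℝ) ^ (α - (N : ℝ)))
    (hR_diag : ∀ x : G, Rα x x ≤ c₂)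
    (p : ℝ) (hp : ((N : ℝ) + α) / ((N : ℝ) - 2) ≤ p)
    (u : ℕ → G → ℝ)
    (hbdd : ∃ M : ℝ, ∀ n, MemD12 S N (u n) ∧ D12Norm S (u n) ≤ M) :
    ∃ φ : ℕ → ℕ, StrictMono φ ∧ ∃ v : G → ℝ, MemD12 S N v ∧
      (∀ x : G, Tendsto (fun n => u (φ n) x) atTop (𝓝 (v x))) ∧
      ∃ L M : ℕ → ℝ,
        (∀ r : ℕ, 1 ≤ r →
          Tendsto (fun n => ∑' x : {z : G // r < wordDist S 1 z}, gradSq S (u (φ n)) (x : G))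
            atTop (𝓝 (L r)) ∧
          Tendsto (fun n => ∑' x : {z : G // r < wordDist S 1 z},
              conv Rα (fun y => |u (φ n) y| ^ p) (x : G) * |u (φ n) (x : G)| ^ p)
            atTop (𝓝 (M r))) ∧
        ∃ μinf νinf : ℝ, Tendsto L atTop (𝓝 μinf) ∧ Tendsto M atTop (𝓝 νinf) ∧
          νinf ≤ bestK S N Rα p * μinf ^ p ∧
          Tendsto (fun n => D12Norm S (u (φ n)) ^ 2) atTop (𝓝 (D12Norm S v ^ 2 + μinf)) ∧
          Tendsto (fun n => energy Rα p (u (φ n))) atTop (𝓝 (energy Rα p v + νinf)) := by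
  exact concentration_compactness_mass_at_infinity_general S hS_gen hS_sym N hN C₁ C₂ hC₁ hgrowth α
    hα hαN Rα hR_nonneg c₂ hR_up hR_diag p hp u hbdd

end Choquard
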